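/- arXiv:2402.02458 — 3 statements merged into one kernel-verified Lean document; each statement's English description precedes it below -/
import Mathlib

section
/- Let n and k be positive integers with k ≡ 1 (mod 3), k ≥ 4 and n ≥ k+3, and let G be a potted graph of order n whose cycle has length k. Set y₁ = (1/18)(k+2)(k+5)·3^{(n−k)/3} + (1/9)(n+5)(k−1), y₂ = (1/18)k(k+5)·3^{(n−k)/3} + (1/3)(k−1) + (1/18)(k+2)(k+5)·((n−k)/3 + 1), y₃ = (1/18)k(k+5)·3^{(n−k−1)/3} + (1/18)(k+2)(k+5) and y₄ = (1/18)(k+2)(k+5)·3^{(n−k−1)/3} + (1/3)(k−1). Then: if n ≡ 0 (mod 3), m(G) ≤ (1/18)(k+2)(k+5)·3^{(n−k−2)/3}; if n ≡ 1 (mod 3), m(G) ≤ max{y₁, y₂}; if n ≡ 2 (mod 3), m(G) ≤ max{y₃, y₄}. -/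
open scoped Classical

variable {V : Type*}

/-- The number of neighbors of `v` that lie inside the finite set `s`,
i.e. the degree of `v` in the subgraph induced by `s` (when `v ∈ s`). -/
noncomputable def nbrCount (G : SimpleGraph V) (s : Finset V) (v : V) : ℕ :=
  {w ∈ (s : Set V) | G.Adj v w}.ncard

/-- `s` is a dissociation set of `G`: the subgraph induced by `s` has maximum degree at most 1. -/
def IsDissoc (G : SimpleGraph V) (s : Finset V) : Prop :=
  ∀ v ∈ s, nbrCount G s v ≤ 1

/-- The dissociation number of the subgraph of `G` induced by `A`. -/
noncomputable def dissNumOn (G : SimpleGraph V) (A : Set V) : ℕ :=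
  sSup {n | ∃ s : Finset V, ↑s ⊆ A ∧ IsDissoc G s ∧ s.card = n}

/-- `s` is a maximum dissociation set of the subgraph of `G` induced by `A`. -/
def IsMaxDissocOn (G : SimpleGraph V) (A : Set V) (s : Finset V) : Prop :=
  ↑s ⊆ A ∧ IsDissoc G s ∧ s.card = dissNumOn G A

/-- The number of maximum dissociation sets of the subgraph of `G` induced by `A`. -/
noncomputable def numMaxDissocOn (G : SimpleGraph V) (A : Set V) : ℕ :=
  Nat.card {s : Finset V // IsMaxDissocOn G A s}

/-- The dissociation number of `G`. -/
noncomputable def dissNum (G : SimpleGraph V) : ℕ :=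
  dissNumOn G Set.univ

/-- `s` is a maximum dissociation set of `G`. -/
def IsMaxDissoc (G : SimpleGraph V) (s : Finset V) : Prop :=
  IsMaxDissocOn G Set.univ s

/-- The number `m(G)` of maximum dissociation sets of `G`. -/
noncomputable def numMaxDissoc (G : SimpleGraph V) : ℕ :=
  numMaxDissocOn G Set.univ

/-- `m(G[A], u⁻)`: maximum dissociation sets of `G[A]` not containing `u`. -/
noncomputable def numMaxDissocOnAway (G : SimpleGraph V) (A : Set V) (u : V) : ℕ :=
  Nat.card {s : Finset V // IsMaxDissocOn G A s ∧ u ∉ s}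

/-- `m(G[A], u⁰)`: maximum dissociation sets of `G[A]` containing `u` with induced degree 0. -/
noncomputable def numMaxDissocOnDeg0 (G : SimpleGraph V) (A : Set V) (u : V) : ℕ :=
  Nat.card {s : Finset V // IsMaxDissocOn G A s ∧ u ∈ s ∧ nbrCount G s u = 0}

/-- `m(G[A], u¹)`: maximum dissociation sets of `G[A]` containing `u` with induced degree 1. -/
noncomputable def numMaxDissocOnDeg1 (G : SimpleGraph V) (A : Set V) (u : V) : ℕ :=
  Nat.card {s : Finset V // IsMaxDissocOn G A s ∧ u ∈ s ∧ nbrCount G s u = 1}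

/-- `m(G, u⁻)`. -/
noncomputable def numMaxDissocAway (G : SimpleGraph V) (u : V) : ℕ :=
  numMaxDissocOnAway G Set.univ u

/-- `m(G, u⁰)`. -/
noncomputable def numMaxDissocDeg0 (G : SimpleGraph V) (u : V) : ℕ :=
  numMaxDissocOnDeg0 G Set.univ u

/-- `m(G, u¹)`. -/
noncomputable def numMaxDissocDeg1 (G : SimpleGraph V) (u : V) : ℕ :=
  numMaxDissocOnDeg1 G Set.univ u

/-- `m̄`: relative count, `numMaxDissocOn G B` if `dissNumOn G B = dissNumOn G A`, else 0. -/
noncomputable def mbar (G : SimpleGraph V) (A B : Set V) : ℕ :=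
  if dissNumOn G B = dissNumOn G A then numMaxDissocOn G B else 0

/-- `G` is a potted graph whose (unique) cycle has length `k`: `G` is connected and unicyclic
(equivalently, connected with as many edges as vertices), and its cycle has length `k` and
contains a unique vertex of degree larger than 2. -/
def IsPotted (G : SimpleGraph V) (k : ℕ) : Prop :=
  G.Connected ∧ G.edgeSet.ncard = Nat.card V ∧
    ∃ (v : V) (c : G.Walk v v), c.IsCycle ∧ c.length = k ∧
      ∃! u, u ∈ c.support ∧ 2 < (G.neighborSet u).ncard


/-- Correction terms in the bounds. -/
def d1 (e : ℕ) : ℕ := if e = 0 then 1 else 0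
def d2 (e m : ℕ) : ℕ := if e = 0 then m + 2 else if e = 1 then 1 else 0

/-- Numeric invariant of forests whose one-point extension is of type `M`. -/
def NR (n x u v : ℕ) : Prop :=
  ∃ m e, n + 1 = 3 * (m + 1) + e ∧ e < 3 ∧ 1 ≤ x ∧ x ≤ 3 ^ m ∧ x + u ≤ 3 ^ m + d1 e ∧
    x + u + v ≤ 3 ^ m + d2 e m

def NS1 (n x u z : ℕ) : Prop := 1 ≤ x ∧ NR (n + 1) z x u

def NFin (a e x y z : ℕ) : Prop :=
  x ≤ 3 ^ a + d2 e a ∨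
    (x + 2 * y ≤ 3 * 3 ^ a + 2 * d1 e ∧ x + y + z ≤ 3 * 3 ^ a + d2 e a)

def NS0 (n x y z : ℕ) : Prop :=
  1 ≤ x ∧ 1 ≤ y ∧
  ((n = 0 ∧ x = 1 ∧ y = 1 ∧ z = 0) ∨
    ∃ a e, n = 3 * (a + 1) + e ∧ e < 3 ∧ y ≤ 3 ^ a ∧ y + z ≤ 3 ^ a + d1 e ∧ NFin a e x y z) ∧
  (∀ n' x' u' v', NR n' x' u' v' → NR (n + n') (x * x') (y * u') (y * v' + z * u')) ∧
  (∀ n' x' u' z', NS1 n' x' u' z' → NS1 (n + n') (x * x') (y * u') (y * z'))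

lemma lt3pow (m : ℕ) : m + 1 ≤ 3 ^ m := Nat.lt_pow_self (by norm_num)

lemma lt3pow2 (m : ℕ) : 2 * m + 1 ≤ 3 ^ m := by
  induction m with
  | zero => simp
  | succ k ih => rw [pow_succ]; omega

lemma NR_big {n x u v m e : ℕ} (h : n + 1 = 3 * (m + 1) + e) (h3 : 3 ≤ e) (h6 : e < 9)
    (hx : 1 ≤ x) (hb : x + u + v ≤ 3 * 3 ^ m) : NR n x u v := by
  have h1 : 3 ^ (m + 1) ≤ 3 ^ (m + e / 3) := Nat.pow_le_pow_right (by norm_num) (by omega)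
  rw [pow_succ] at h1
  exact ⟨m + e / 3, e % 3, by omega, by omega, hx, by omega, by omega, by omega⟩

lemma act_first {x N T K : ℕ} (h1 : x ≤ N) (h2 : T ≤ K) : x * T ≤ N * K := Nat.mul_le_mul h1 h2

lemma act_mid {x u Y T3 N A δ K : ℕ} (hx : x ≤ N) (hu : x + u ≤ N + δ) (hY : Y ≤ A)
    (hYT : Y ≤ T3) (hT : T3 ≤ K) : T3 * x + Y * u ≤ N * K + δ * A := by
  obtain ⟨w, rfl⟩ := Nat.exists_eq_add_of_le hYT
  have h1 : w * x ≤ w * N := Nat.mul_le_mul_left _ hx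
  have h2 : Y * (x + u) ≤ Y * (N + δ) := Nat.mul_le_mul_left _ hu
  have h3 : N * (Y + w) ≤ N * K := Nat.mul_le_mul_left _ hT
  have h4 : δ * Y ≤ δ * A := Nat.mul_le_mul_left _ hY
  nlinarith

lemma act_tot {x u v Y Z W N A δ γ δ' γ' : ℕ} (hx : x ≤ N) (hu : x + u ≤ N + δ)
    (hv : x + u + v ≤ N + γ) (hd : δ ≤ γ)
    (hY : Y ≤ A) (hZ : Y + Z ≤ A + δ') (hW : Y + Z + W ≤ A + γ') :
    (Y + Z + W) * x + Y * u + (Y * v + Z * u) ≤ N * A + N * γ' + γ * A + δ * δ' := by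
  obtain ⟨g, rfl⟩ := Nat.exists_eq_add_of_le hd
  have h1 : W * x ≤ W * N := Nat.mul_le_mul_left _ hx
  have h2 : Z * (x + u) ≤ Z * (N + δ) := Nat.mul_le_mul_left _ hu
  have h3 : Y * (x + u + v) ≤ Y * (N + (δ + g)) := Nat.mul_le_mul_left _ hv
  have h4 : N * (Y + Z + W) ≤ N * (A + γ') := Nat.mul_le_mul_left _ hW
  have h5 : δ * (Y + Z) ≤ δ * (A + δ') := Nat.mul_le_mul_left _ hZ
  have h6 : g * Y ≤ g * A := Nat.mul_le_mul_left _ hY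
  nlinarith

/-- The arithmetic behind the action of an `M`-tree. -/
lemma arith_act (m a e f : ℕ) (he : e < 3) (hf : f < 3) (hef : e + f < 3) :
    3 ^ m * (3 ^ a + d2 f a) ≤ 3 * (3 ^ m * 3 ^ a) ∧
    3 ^ m * (3 ^ a + d2 f a) + d1 e * 3 ^ a ≤ 3 * (3 ^ m * 3 ^ a) + d1 (e + f) ∧
    3 ^ m * 3 ^ a + 3 ^ m * d2 f a + d2 e m * 3 ^ a + d1 e * d1 f ≤
      3 * (3 ^ m * 3 ^ a) + d2 (e + f) (m + a + 1) := by
  have hN := lt3pow m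
  have hA := lt3pow a
  generalize 3 ^ m = N at *
  generalize 3 ^ a = A at *
  obtain ⟨N, rfl⟩ := Nat.exists_eq_add_of_le hN
  obtain ⟨A, rfl⟩ := Nat.exists_eq_add_of_le hA
  refine ⟨?_, ?_, ?_⟩ <;> interval_cases e <;> interval_cases f <;> simp [d1, d2] at * <;>
    nlinarith [Nat.zero_le (m*a), Nat.zero_le (m*A), Nat.zero_le (N*a), Nat.zero_le (N*A)]

lemma arith_act_big (m a e f : ℕ) (he : e < 3) (hf : f < 3) (hef : 3 ≤ e + f) :
    3 ^ m * 3 ^ a + 3 ^ m * d2 f a + d2 e m * 3 ^ a + d1 e * d1 f ≤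
      9 * (3 ^ m * 3 ^ a) := by
  have hN := lt3pow m
  have hA := lt3pow a
  generalize 3 ^ m = N at *
  generalize 3 ^ a = A at *
  obtain ⟨N, rfl⟩ := Nat.exists_eq_add_of_le hN
  obtain ⟨A, rfl⟩ := Nat.exists_eq_add_of_le hA
  interval_cases e <;> interval_cases f <;> simp [d1, d2] at * <;>
    nlinarith [Nat.zero_le (m*a), Nat.zero_le (m*A), Nat.zero_le (N*a), Nat.zero_le (N*A)]

lemma d1_le_d2 (e m : ℕ) : d1 e ≤ d2 e m := by
  unfold d1 d2; split_ifs <;> omega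

/-- The action of an `M`-tree on `NR`. -/
lemma M_act_R {n Y Z W n' x u v : ℕ} (h : NR n Y Z W) (h' : NR n' x u v) :
    NR (n + n' + 1) ((Y + Z + W) * x) (Y * u) (Y * v + Z * u) := by
  obtain ⟨a, f, hn, hf, hY0, hY, hZ, hW⟩ := h
  obtain ⟨m, e, hn', he, hx0, hx, hu, hv⟩ := h'
  have hpos : 1 ≤ (Y + Z + W) * x := Nat.mul_pos (by omega) hx0
  have htot := act_tot hx hu hv (d1_le_d2 e m) hY hZ hW
  by_cases hef : e + f < 3
  · obtain ⟨i1, i2, i3⟩ := arith_act m a e f he hf hef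
    have e1 : 3 ^ (m + a + 1) = 3 * (3 ^ m * 3 ^ a) := by ring
    refine ⟨m + a + 1, e + f, by omega, hef, hpos, ?_, ?_, ?_⟩
    · rw [e1, mul_comm]; exact (act_first hx hW).trans i1
    · rw [e1]
      exact (act_mid hx hu hY (by omega) hW).trans i2
    · rw [e1]
      exact htot.trans i3
  · have := arith_act_big m a e f he hf (by omega)
    refine NR_big (m := m + a + 1) (e := e + f) (by omega) (by omega) (by omega) hpos ?_
    have e1 : 3 ^ (m + a + 1) = 3 * (3 ^ m * 3 ^ a) := by ring
    rw [e1]; omega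

/-- The action of an `M`-tree on `NS1`. -/
lemma M_act_S1 {n Y Z W n' x u z : ℕ} (h : NR n Y Z W) (h' : NS1 n' x u z) :
    NS1 (n + n' + 1) ((Y + Z + W) * x) (Y * u) (Y * z) := by
  obtain ⟨a, f, hn, hf, hY0, hY, hZ, hW⟩ := h
  obtain ⟨hx0, m, e, hn', he, hz0, hz, hu, hv⟩ := h'
  have hxN : x ≤ 3 ^ m := by
    have : d1 e ≤ 1 := by unfold d1; split_ifs <;> omega
    omega
  refine ⟨Nat.mul_pos (by omega) hx0, ?_⟩
  have hpos : 1 ≤ Y * z := Nat.mul_pos hY0 hz0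
  -- reorder
  have hmid := act_mid hxN (by omega : x + z ≤ 3 ^ m + d1 e) hY (by omega : Y ≤ Y + Z + W) hW
  have htot := act_mid hxN (by omega : x + (z + u) ≤ 3 ^ m + d2 e m) hY
    (by omega : Y ≤ Y + Z + W) hW
  have e2 : 3 ^ m * (3 ^ a + d2 f a) = 3 ^ m * 3 ^ a + 3 ^ m * d2 f a := by ring
  by_cases hef : e + f < 3
  · obtain ⟨i1, i2, i3⟩ := arith_act m a e f he hf hef
    have e1 : 3 ^ (m + a + 1) = 3 * (3 ^ m * 3 ^ a) := by ring
    refine ⟨m + a + 1, e + f, by omega, hef, hpos, ?_, ?_, ?_⟩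
    · rw [e1]
      have := Nat.mul_le_mul hY hz
      rw [mul_comm (3 ^ a)] at this
      omega
    · rw [e1]
      omega
    · rw [e1, add_comm (Y * z), add_assoc, ← mul_add]
      omega
  · have := arith_act_big m a e f he hf (by omega)
    refine NR_big (m := m + a + 1) (e := e + f) (by omega) (by omega) (by omega) hpos ?_
    have e1 : 3 ^ (m + a + 1) = 3 * (3 ^ m * 3 ^ a) := by ring
    rw [e1, add_comm (Y * z), add_assoc, ← mul_add]; omega

lemma NS0_nil : NS0 0 1 1 0 := by
  refine ⟨le_rfl, le_rfl, Or.inl ⟨rfl, rfl, rfl, rfl⟩, ?_, ?_⟩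
  · intro n' x' u' v' h; simpa using h
  · intro n' x' u' v' h; simpa using h

lemma d1_le_one (e : ℕ) : d1 e ≤ 1 := by unfold d1; split_ifs <;> omega

lemma d2_le (e m : ℕ) : d2 e m ≤ m + 2 := by unfold d2; split_ifs <;> omega

/-- product of two `(y, y+z)` pairs. -/
lemma pair_mul {y z Y Z N A δ δ' : ℕ} (hy : y ≤ N) (hz : y + z ≤ N + δ) (hY : Y ≤ A)
    (hZ : Y + Z ≤ A + δ') : Y * y + (Y * z + Z * y) ≤ N * A + N * δ' + A * δ := by
  have h1 : Y * (y + z) ≤ Y * (N + δ) := Nat.mul_le_mul_left _ hz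
  have h2 : y * Z ≤ N * Z := Nat.mul_le_mul_right _ hy
  have h3 : N * (Y + Z) ≤ N * (A + δ') := Nat.mul_le_mul_left _ hZ
  have h4 : δ * Y ≤ δ * A := Nat.mul_le_mul_left _ hY
  nlinarith

lemma arith_pair (m a e f : ℕ) :
    3 ^ m * 3 ^ a + 3 ^ m * d1 f + 3 ^ a * d1 e ≤ 3 * (3 ^ m * 3 ^ a) := by
  have hN := lt3pow m
  have hA := lt3pow a
  have h1 := d1_le_one e
  have h2 := d1_le_one f
  generalize 3 ^ m = N at *
  generalize 3 ^ a = A at *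
  have h3 : N * d1 f ≤ N * 1 := Nat.mul_le_mul_left _ h2
  have h4 : A * d1 e ≤ A * 1 := Nat.mul_le_mul_left _ h1
  have h5 : N * 1 ≤ N * A := Nat.mul_le_mul_left _ (by omega)
  have h6 : A * 1 ≤ A * N := Nat.mul_le_mul_left _ (by omega)
  nlinarith

/-- multi bounds from two trees -/
lemma fin_tree_tree {m a e f x y z X Y Z : ℕ} (he : e < 3) (hf : f < 3)
    (hy : y ≤ 3 ^ m) (hz : y + z ≤ 3 ^ m + d1 e) (hx : x ≤ 3 ^ m + d2 e m)
    (hY : Y ≤ 3 ^ a) (hZ : Y + Z ≤ 3 ^ a + d1 f) (hX : X ≤ 3 ^ a + d2 f a) :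
    (e + f = 0 → X * x + 2 * (Y * y) ≤ 9 * (3 ^ m * 3 ^ a) + 2 ∧
      X * x + Y * y + (Y * z + Z * y) ≤ 9 * (3 ^ m * 3 ^ a) + 3) ∧
    (e + f ≠ 0 → X * x + 2 * (Y * y) ≤ 9 * (3 ^ m * 3 ^ a) ∧
      X * x + Y * y + (Y * z + Z * y) ≤ 9 * (3 ^ m * 3 ^ a)) := by
  have hp := pair_mul hy hz hY hZ
  have hN := lt3pow m
  have hA := lt3pow a
  have hxx := Nat.mul_le_mul hX hx
  have hyy := Nat.mul_le_mul hY hy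
  clear hy hz hx hY hZ hX
  generalize Y * z + Z * y = Q1 at *
  generalize Y * y = Q2 at *
  generalize X * x = Q3 at *
  generalize 3 ^ m = N at *
  generalize 3 ^ a = A at *
  obtain ⟨N, rfl⟩ := Nat.exists_eq_add_of_le hN
  obtain ⟨A, rfl⟩ := Nat.exists_eq_add_of_le hA
  constructor
  · intro h
    obtain ⟨rfl, rfl⟩ : e = 0 ∧ f = 0 := by omega
    simp [d1, d2] at *
    constructor <;> nlinarith [Nat.zero_le (m*a), Nat.zero_le (m*A), Nat.zero_le (N*a), Nat.zero_le (N*A)]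
  · intro h
    interval_cases e <;> interval_cases f <;> simp [d1, d2] at * <;>
     constructor <;> nlinarith [Nat.zero_le (m*a), Nat.zero_le (m*A), Nat.zero_le (N*a), Nat.zero_le (N*A)]

/-- multi bounds from a multi forest and a tree -/
lemma fin_multi_tree {m a e f x y z Y Z W : ℕ} (he : e < 3) (hf : f < 3) (hy0 : 1 ≤ y)
    (hz : x + 2 * y ≤ 3 * 3 ^ m + 2 * d1 e) (hx : x + y + z ≤ 3 * 3 ^ m + d2 e m)
    (hY : Y ≤ 3 ^ a) (hZ : Y + Z ≤ 3 ^ a + d1 f) (hX : Y + Z + W ≤ 3 ^ a + d2 f a) :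
    (e + f < 3 → (Y + Z + W) * x + 2 * (Y * y) ≤ 9 * (3 ^ m * 3 ^ a) + 2 * d1 (e + f) ∧
      (Y + Z + W) * x + Y * y + (Y * z + Z * y) ≤
        9 * (3 ^ m * 3 ^ a) + d2 (e + f) (m + a + 1)) ∧
    (3 ≤ e + f → (Y + Z + W) * x + 2 * (Y * y) ≤ 27 * (3 ^ m * 3 ^ a) ∧
      (Y + Z + W) * x + Y * y + (Y * z + Z * y) ≤ 27 * (3 ^ m * 3 ^ a)) := by
  have hx3 : x ≤ 3 * 3 ^ m := by have := d1_le_one e; omega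
  have hx2 : x + y ≤ 3 * 3 ^ m + d1 e := by have := d1_le_one e; omega
  have hmid := act_mid hx3 hz hY (by omega : Y ≤ Y + Z + W) hX
  have htot := act_tot hx3 hx2 hx (d1_le_d2 e m) hY hZ hX
  have hN := lt3pow m
  have hA := lt3pow a
  have e1 : 2 * (Y * y) = Y * (2 * y) := by ring
  rw [e1]
  generalize (Y + Z + W) * x + Y * (2 * y) = Q1 at *
  generalize (Y + Z + W) * x + Y * y + (Y * z + Z * y) = Q2 at *
  clear hz hx hY hZ hX hx2 hx3 e1
  generalize 3 ^ m = N at *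
  generalize 3 ^ a = A at *
  obtain ⟨N, rfl⟩ := Nat.exists_eq_add_of_le hN
  obtain ⟨A, rfl⟩ := Nat.exists_eq_add_of_le hA
  clear hN hA
  constructor
  · intro h
    interval_cases e <;> interval_cases f <;> simp [d1, d2] at * <;>
     constructor <;> nlinarith [Nat.zero_le (m*a), Nat.zero_le (m*A), Nat.zero_le (N*a), Nat.zero_le (N*A)]
  · intro h
    interval_cases e <;> interval_cases f <;> simp [d1, d2] at * <;>
     constructor <;> nlinarith [Nat.zero_le (m*a), Nat.zero_le (m*A), Nat.zero_le (N*a), Nat.zero_le (N*A)]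

lemma M_S0 {n Y Z W n' x y z : ℕ} (h : NR n Y Z W) (h' : NS0 n' x y z) :
    NS0 (n + n' + 1) ((Y + Z + W) * x) (Y * y) (Y * z + Z * y) := by
  obtain ⟨hx0, hy0, hb, hR, hS⟩ := h'
  have hh := h
  obtain ⟨a, f, hn, hf, hY0, hY, hZ, hW⟩ := hh
  refine ⟨Nat.mul_pos (by omega) hx0, Nat.mul_pos hY0 hy0, Or.inr ?_, ?_, ?_⟩
  · rcases hb with ⟨rfl, rfl, rfl, rfl⟩ | ⟨m, e, hn', he, hy, hz, hfin⟩
    · refine ⟨a, f, by omega, hf, by simpa using hY, by simpa using hZ, Or.inl (by simpa using hW)⟩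
    · have hp := pair_mul hy hz hY hZ
      have ha := arith_pair m a e f
      have e1 : 3 ^ (m + a + 1) = 3 * (3 ^ m * 3 ^ a) := by ring
      have e2 : 3 ^ (m + a + 2) = 9 * (3 ^ m * 3 ^ a) := by ring
      by_cases hef : e + f < 3
      · refine ⟨m + a + 1, e + f, by omega, hef, by rw [e1]; omega, by rw [e1]; omega, Or.inr ?_⟩
        rw [e1]
        rcases hfin with hfin | ⟨hf1, hf2⟩
        · have key := fin_tree_tree he hf hy hz hfin hY hZ hW
          by_cases h0 : e + f = 0
          · have := key.1 h0
            simp [h0, d1, d2]; omega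
          · have := key.2 h0
            omega
        · have key := (fin_multi_tree he hf hy0 hf1 hf2 hY hZ hW).1 hef
          omega
      · refine ⟨m + a + 2, e + f - 3, by omega, by omega, by rw [e2]; omega, by rw [e2]; omega,
          Or.inr ?_⟩
        rw [e2]
        rcases hfin with hfin | ⟨hf1, hf2⟩
        · have key := (fin_tree_tree he hf hy hz hfin hY hZ hW).2 (by omega)
          omega
        · have key := (fin_multi_tree he hf hy0 hf1 hf2 hY hZ hW).2 (by omega)
          omega
  · intro n2 x2 u2 v2 h2
    have := M_act_R h (hR _ _ _ _ h2)
    convert this using 1 <;> ring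
  · intro n2 x2 u2 v2 h2
    have := M_act_S1 h (hS _ _ _ _ h2)
    convert this using 1 <;> ring

lemma NS0_yz_le {n x y z : ℕ} (h : NS0 n x y z) : ∃ a f, n = 3 * a + f ∧ f < 3 ∧
    y + z ≤ 3 ^ a ∧ (∀ N, 1 ≤ N → (y + z) * (N + 1) ≤ N * 3 ^ a + d1 f) ∧
    (∀ N, 1 ≤ N → (y + z) * N ≤ N * 3 ^ a) ∧ 2 * y + z ≤ 3 ^ a + d1 f := by
  obtain ⟨hx0, hy0, hb, hR, hS⟩ := h
  rcases hb with ⟨rfl, rfl, rfl, rfl⟩ | ⟨m, e, hn', he, hy, hz, hfin⟩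
  · refine ⟨0, 0, rfl, by norm_num, by norm_num, ?_, ?_, by simp [d1]⟩ <;> intro N hN <;> simp [d1]
  · have h1 := d1_le_one e
    have hN := lt3pow m
    refine ⟨m + 1, e, hn', he, ?_, ?_, ?_, ?_⟩
    · rw [pow_succ]; omega
    · intro N hN'
      rw [pow_succ]
      generalize 3 ^ m = A at *
      have := Nat.mul_le_mul_right (N + 1) hz
      have h3 : d1 e * N ≤ 1 * N := Nat.mul_le_mul_right _ h1
      nlinarith
    · intro N hN'
      rw [pow_succ]
      generalize 3 ^ m = A at *
      have := Nat.mul_le_mul_right N hz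
      have h3 : d1 e * N ≤ 1 * N := Nat.mul_le_mul_right _ h1
      nlinarith
    · rw [pow_succ]; omega

lemma NR_two : NR 2 1 1 1 := ⟨0, 0, by norm_num, by norm_num, by norm_num, by norm_num, by norm_num [d1],
  by norm_num [d2]⟩

/-- A single `P1` tree. -/
lemma P1_base {n x y z : ℕ} (h : NS0 n x y z) : NS1 (n + 1) (y + z) x y := by
  have h2 := h.2.2.2.1 _ _ _ _ NR_two
  obtain ⟨a, f, hn, hf, h3, -, -, h4⟩ := NS0_yz_le h
  obtain ⟨m, e, hn', he, hx0, hx, hu, hv⟩ := h2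
  have hy0 := h.2.1
  obtain ⟨rfl, rfl⟩ : a = m ∧ f = e := by omega
  simp only [mul_one] at *
  exact ⟨by omega, a, f, by omega, he, hy0, by omega, by omega, by omega⟩

lemma P1_S0 {n x y z n' x' y' z' : ℕ} (h : NS0 n x y z) (h' : NS0 n' x' y' z') :
    NS1 (n + n' + 1) ((y + z) * x') (x * y') (y * y') := by
  have := h'.2.2.2.2 _ _ _ _ (P1_base h)
  convert this using 1 <;> ring

lemma P1_S1 {n x y z n' x' u' z' : ℕ} (h : NS0 n x y z) (h' : NS1 n' x' u' z') :
    NR (n + n' + 1) ((y + z) * x') 0 (x * z' + y * u') := by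
  have h2 := h.2.2.2.1 _ _ _ _ h'.2
  obtain ⟨a, f, hn, hf, h3, -, -, h4⟩ := NS0_yz_le h
  have hy0 := h.2.1
  obtain ⟨hx0, m, e, hn', he, hz0, hz, hu, hv⟩ := h'
  obtain ⟨m2, e2, hn2, he2, hx2, hxx, huu, hvv⟩ := h2
  have hd := d1_le_one e
  have hm : m + a ≤ m2 := by omega
  have hb : (y + z) * x' ≤ 3 ^ m2 := by
    calc (y + z) * x' ≤ 3 ^ a * 3 ^ m := Nat.mul_le_mul h3 (by omega)
      _ = 3 ^ (m + a) := by ring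
      _ ≤ 3 ^ m2 := Nat.pow_le_pow_right (by norm_num) hm
  refine ⟨m2, e2, by omega, he2, Nat.mul_pos (by omega) hx0, hb, by omega, ?_⟩
  nlinarith

lemma P1_R {n x y z n' x' u' v' : ℕ} (h : NS0 n x y z) (h' : NR n' x' u' v') :
    NR (n + n' + 1) ((y + z) * x') 0 (y * u') := by
  obtain ⟨a, f, hn, hf, h3, h5, h6, h4⟩ := NS0_yz_le h
  have hy0 := h.2.1
  obtain ⟨m, e, hn', he, hx0, hx, hu, hv⟩ := h'
  have hd := d1_le_one e
  have hN := lt3pow m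
  have hA := lt3pow a
  have e1 : 3 ^ (m + a) = 3 ^ m * 3 ^ a := by ring
  have hpos : 1 ≤ (y + z) * x' := Nat.mul_pos (by omega) hx0
  have hb1 : (y + z) * x' ≤ 3 ^ m * 3 ^ a := by
    rw [mul_comm]; exact Nat.mul_le_mul hx h3
  have hb2 : (y + z) * x' + y * u' ≤ (y + z) * (3 ^ m + d1 e) := by
    have := Nat.mul_le_mul_left (y + z) hu
    nlinarith
  have i1 := h5 (3 ^ m) (by omega)
  have i2 := h6 (3 ^ m) (by omega)
  have hdf := d1_le_one f
  have hNA : 1 ≤ 3 ^ m * 3 ^ a := Nat.mul_pos (by omega) (by omega)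
  by_cases hef : e + f < 2
  · refine ⟨m + a, e + f + 1, by omega, by omega, hpos, by omega, by omega, ?_⟩
    rw [e1]
    rcases Nat.eq_zero_or_pos e with rfl | he0
    · simp only [d1, if_true] at hb2
      interval_cases f <;> simp [d1, d2] at * <;> omega
    · obtain ⟨rfl, rfl⟩ : e = 1 ∧ f = 0 := by omega
      simp [d1, d2] at *
      omega
  · refine NR_big (m := m + a) (e := e + f + 1) (by omega) (by omega) (by omega) hpos ?_
    have : (y + z) * (3 ^ m + d1 e) ≤ (y + z) * (3 ^ m + 1) := Nat.mul_le_mul_left _ (by omega)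
    rw [e1]
    omega

lemma P0_S0 {n x u z n' x' y' z' : ℕ} (h : NS1 n x u z) (h' : NS0 n' x' y' z') :
    NR (n + n' + 1) (z * x') (x * y') (x * z' + u * y') := by
  have := h'.2.2.2.1 _ _ _ _ h.2
  convert this using 1 <;> ring

lemma rearr {x z x' z' N A : ℕ} (hx : 1 ≤ x) (hx' : 1 ≤ x') (hz : 1 ≤ z) (hz' : 1 ≤ z')
    (h : x + z ≤ N + 1) (h' : x' + z' ≤ A + 1) : z * x' + x * z' ≤ N * A + 1 := by
  obtain ⟨x, rfl⟩ := Nat.exists_eq_add_of_le hx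
  obtain ⟨x', rfl⟩ := Nat.exists_eq_add_of_le hx'
  obtain ⟨z, rfl⟩ := Nat.exists_eq_add_of_le hz
  obtain ⟨z', rfl⟩ := Nat.exists_eq_add_of_le hz'
  have h1 : x + z + 1 ≤ N := by omega
  have h2 : x' + z' + 1 ≤ A := by omega
  have := Nat.mul_le_mul h1 h2
  nlinarith [Nat.zero_le (x * x'), Nat.zero_le (z * z')]

lemma rearr2 {x z x' z' N A : ℕ} (hx : x ≤ N) (hz : z ≤ N)
    (h' : x' + z' ≤ A) : z * x' + x * z' ≤ N * A := by
  have h1 := Nat.mul_le_mul_right x' hz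
  have h2 := Nat.mul_le_mul_right z' hx
  have h3 := Nat.mul_le_mul_left N h'
  nlinarith

lemma P0_S1 {n x u z n' x' u' z' : ℕ} (h : NS1 n x u z) (h' : NS1 n' x' u' z') :
    NR (n + n' + 1) (z * x') 0 (x * z') := by
  obtain ⟨hx0, a, f, hn, hf, hz0, hz, hu, hv⟩ := h
  obtain ⟨hx0', m, e, hn', he, hz0', hz', hu', hv'⟩ := h'
  have hd := d1_le_one e
  have hdf := d1_le_one f
  have hN := lt3pow m
  have hA := lt3pow a
  have hxa : x ≤ 3 ^ a := by omega
  have hxm : x' ≤ 3 ^ m := by omega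
  have e1 : 3 ^ (a + m) = 3 ^ a * 3 ^ m := by ring
  have hpos : 1 ≤ z * x' := Nat.mul_pos hz0 hx0'
  have hb : z * x' ≤ 3 ^ a * 3 ^ m := Nat.mul_le_mul hz hxm
  have r0 := rearr (N := 3 ^ a) (A := 3 ^ m) hx0 hx0' hz0 hz0' (by omega) (by omega)
  by_cases hef : e + f < 2
  · refine ⟨a + m, e + f + 1, by omega, by omega, hpos, by omega, by omega, ?_⟩
    rw [e1]
    rcases Nat.eq_zero_or_pos (e + f) with h0 | h0
    · obtain ⟨rfl, rfl⟩ : e = 0 ∧ f = 0 := by omega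
      simp [d2]; omega
    · rcases Nat.eq_zero_or_pos e with rfl | he0
      · obtain rfl : f = 1 := by omega
        have := rearr2 (x := x') (z := z') (x' := x) (z' := z) (N := 3 ^ m) (A := 3 ^ a) hxm hz'
          (by simp [d1] at hu; omega)
        simp [d2]; nlinarith
      · obtain ⟨rfl, rfl⟩ : e = 1 ∧ f = 0 := by omega
        have := rearr2 (x := x) (z := z) (x' := x') (z' := z') (N := 3 ^ a) (A := 3 ^ m) hxa hz
          (by simp [d1] at hu'; omega)
        simp [d2]; nlinarith
  · refine NR_big (m := a + m) (e := e + f + 1) (by omega) (by omega) (by omega) hpos ?_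
    have : 1 ≤ 3 ^ a * 3 ^ m := Nat.mul_pos (by omega) (by omega)
    rw [e1]
    omega

lemma P0_R {n x u z n' x' u' v' : ℕ} (h : NS1 n x u z) (h' : NR n' x' u' v') :
    NR (n + n' + 1) (z * x') 0 0 := by
  obtain ⟨hx0, a, f, hn, hf, hz0, hz, hu, hv⟩ := h
  obtain ⟨m, e, hn', he, hx0', hx', hu', hv'⟩ := h'
  have e1 : 3 ^ (a + m) = 3 ^ a * 3 ^ m := by ring
  have hpos : 1 ≤ z * x' := Nat.mul_pos hz0 hx0'
  have hb : z * x' ≤ 3 ^ a * 3 ^ m := Nat.mul_le_mul hz hx'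
  by_cases hef : e + f + 2 < 3
  · exact ⟨a + m, e + f + 2, by omega, by omega, hpos, by omega, by omega, by omega⟩
  · exact NR_big (m := a + m) (e := e + f + 2) (by omega) (by omega) (by omega) hpos (by rw [e1]; omega)

/-- `p` has degree at most `d`, with coefficient `n` at `d`. -/
def PTop (p : Polynomial ℕ) (d n : ℕ) : Prop := p.natDegree ≤ d ∧ p.coeff d = n

lemma PTop.add {p q : Polynomial ℕ} {d a b : ℕ} (h : PTop p d a) (h' : PTop q d b) :
    PTop (p + q) d (a + b) :=
  ⟨Polynomial.natDegree_add_le_of_degree_le h.1 h'.1, by rw [Polynomial.coeff_add, h.2, h'.2]⟩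

lemma PTop.mul {p q : Polynomial ℕ} {d e a b : ℕ} (h : PTop p d a) (h' : PTop q e b) :
    PTop (p * q) (d + e) (a * b) :=
  ⟨Polynomial.natDegree_mul_le_of_le h.1 h'.1, by
    rw [Polynomial.coeff_mul_add_eq_of_natDegree_le h.1 h'.1, h.2, h'.2]⟩

lemma PTop.X_mul {p : Polynomial ℕ} {d a : ℕ} (h : PTop p d a) :
    PTop (Polynomial.X * p) (d + 1) a := by
  have : PTop (Polynomial.X : Polynomial ℕ) 1 1 := ⟨Polynomial.natDegree_X_le, by simp⟩
  have := this.mul h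
  rwa [one_mul, add_comm] at this

lemma PTop.lift {p : Polynomial ℕ} {d a e : ℕ} (h : PTop p d a) (he : d < e) : PTop p e 0 :=
  ⟨h.1.trans he.le, Polynomial.coeff_eq_zero_of_natDegree_lt (h.1.trans_lt he)⟩

lemma PTop.cast {p : Polynomial ℕ} {d a d' a' : ℕ} (h : PTop p d a) (hd : d = d') (ha : a = a') :
    PTop p d' a' := by subst hd ha; exact h

/-- Generating polynomials of rooted forests. -/
inductive Fst : ℕ → Polynomial ℕ → Polynomial ℕ → Polynomial ℕ → Prop
  | nil : Fst 0 1 1 0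
  | cons {n P Y Z n' P' Y' Z'} : Fst n P Y Z → Fst n' P' Y' Z' →
      Fst (n + n' + 1) ((P + Polynomial.X * Y + Polynomial.X * Z) * P') (P * Y')
        (P * Z' + Polynomial.X * Y * Y')

def FInv (n : ℕ) (P Y Z : Polynomial ℕ) : Prop :=
  (∃ D x y z, PTop P D x ∧ PTop Y D y ∧ PTop Z D z ∧ NS0 n x y z) ∨
  (∃ D x u z, PTop P (D + 1) x ∧ PTop Y D u ∧ PTop Z (D + 1) z ∧ NS1 n x u z) ∨
  (∃ D x u v, PTop P (D + 1) x ∧ PTop Y D u ∧ PTop Z D v ∧ NR n x u v)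

lemma Fst.inv {n : ℕ} {P Y Z : Polynomial ℕ} (h : Fst n P Y Z) : FInv n P Y Z := by
  induction h with
  | nil =>
    refine Or.inl ⟨0, 1, 1, 0, ?_, ?_, ?_, NS0_nil⟩ <;> simp [PTop]
  | @cons n P Y Z n' P' Y' Z' h h' ih ih' =>
    rcases ih with ⟨D, x, y, z, hP, hY, hZ, H⟩ | ⟨D, x, u, z, hP, hY, hZ, H⟩ |
      ⟨D, x, u, v, hP, hY, hZ, H⟩
    · have hT : PTop (P + Polynomial.X * Y + Polynomial.X * Z) (D + 1) (y + z) :=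
        (((hP.lift (Nat.lt_succ_self _)).add hY.X_mul).add hZ.X_mul).cast rfl (by omega)
      have hI := hY.X_mul
      rcases ih' with ⟨D', x', y', z', hP', hY', hZ', H'⟩ | ⟨D', x', u', z', hP', hY', hZ', H'⟩ |
        ⟨D', x', u', v', hP', hY', hZ', H'⟩
      · refine Or.inr (Or.inl ⟨D + D', _, _, _, (hT.mul hP').cast (by omega) rfl, hP.mul hY', ?_,
          P1_S0 H H'⟩)
        exact (((hP.mul hZ').lift (Nat.lt_succ_self _)).add
          ((hI.mul hY').cast (by omega) rfl)).cast rfl (by omega)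
      · refine Or.inr (Or.inr ⟨D + D' + 1, _, _, _, (hT.mul hP').cast (by omega) rfl,
          (hP.mul hY').lift (by omega), ?_, P1_S1 H H'⟩)
        exact ((hP.mul hZ').cast (by omega) rfl).add ((hI.mul hY').cast (by omega) rfl)
      · refine Or.inr (Or.inr ⟨D + D' + 1, _, _, _, (hT.mul hP').cast (by omega) rfl,
          (hP.mul hY').lift (by omega), ?_, P1_R H H'⟩)
        exact (((hP.mul hZ').lift (by omega)).add ((hI.mul hY').cast (by omega) rfl)).cast rfl
          (by omega)
    · have hT : PTop (P + Polynomial.X * Y + Polynomial.X * Z) (D + 2) z :=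
        (((hP.lift (by omega)).add (hY.X_mul.lift (by omega))).add hZ.X_mul).cast rfl (by omega)
      have hI := hY.X_mul
      rcases ih' with ⟨D', x', y', z', hP', hY', hZ', H'⟩ | ⟨D', x', u', z', hP', hY', hZ', H'⟩ |
        ⟨D', x', u', v', hP', hY', hZ', H'⟩
      · refine Or.inr (Or.inr ⟨D + D' + 1, _, _, _, (hT.mul hP').cast (by omega) rfl,
          (hP.mul hY').cast (by omega) rfl, ?_, P0_S0 H H'⟩)
        exact ((hP.mul hZ').cast (by omega) rfl).add ((hI.mul hY').cast (by omega) rfl)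
      · refine Or.inr (Or.inr ⟨D + D' + 2, _, _, _, (hT.mul hP').cast (by omega) rfl,
          (hP.mul hY').lift (by omega), ?_, P0_S1 H H'⟩)
        exact (((hP.mul hZ').cast (by omega) rfl).add ((hI.mul hY').lift (by omega))).cast rfl
          (by omega)
      · refine Or.inr (Or.inr ⟨D + D' + 2, _, _, _, (hT.mul hP').cast (by omega) rfl,
          (hP.mul hY').lift (by omega), ?_, P0_R H H'⟩)
        exact (((hP.mul hZ').lift (by omega)).add ((hI.mul hY').lift (by omega))).cast rfl
          (by omega)
    · have hT : PTop (P + Polynomial.X * Y + Polynomial.X * Z) (D + 1) (x + u + v) :=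
        (hP.add hY.X_mul).add hZ.X_mul
      have hI := hY.X_mul
      rcases ih' with ⟨D', x', y', z', hP', hY', hZ', H'⟩ | ⟨D', x', u', z', hP', hY', hZ', H'⟩ |
        ⟨D', x', u', v', hP', hY', hZ', H'⟩
      · exact Or.inl ⟨D + 1 + D', _, _, _, hT.mul hP', hP.mul hY', (hP.mul hZ').add (hI.mul hY'),
          M_S0 H H'⟩
      · refine Or.inr (Or.inl ⟨D + 1 + D', _, _, _, (hT.mul hP').cast (by omega) rfl, hP.mul hY', ?_,
          M_act_S1 H H'⟩)
        exact (((hP.mul hZ').cast (by omega) rfl).add ((hI.mul hY').lift (by omega))).cast rfl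
          (by omega)
      · exact Or.inr (Or.inr ⟨D + 1 + D', _, _, _, (hT.mul hP').cast (by omega) rfl, hP.mul hY',
          (hP.mul hZ').add (hI.mul hY'), M_act_R H H'⟩)

/-- The bound of the statement, in terms of `p = n - k` and `t = (k-1)/3`. -/
def Bound (p t : ℕ) (m : ℚ) : Prop :=
  ∃ s : ℕ, 
    (p = 3 * s + 2 ∧ m ≤ ((t : ℚ) + 1) * (t + 2) / 2 * 3 ^ s) ∨
    (p = 3 * s + 3 ∧ 
      (m ≤ ((t : ℚ) + 1) * (t + 2) / 2 * (3 * 3 ^ s) + t * (t + 2) + t * (s + 1) ∨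
       m ≤ ((t : ℚ) + 1) * (t + 2) / 2 * (3 ^ s + s + 2) + t * (t + 2) * 3 ^ s + t)) ∨
    (p = 3 * s + 4 ∧ 
      (m ≤ ((t : ℚ) + 1) * (t + 2) / 2 * (3 * 3 ^ s) + t ∨
       m ≤ ((t : ℚ) + 1) * (t + 2) / 2 * (3 ^ s + 1) + t * (t + 2) * 3 ^ s))

/-- Real-number version of the final estimate. -/
lemma final_multi {A t x y z M g s : ℚ} (ht : 0 ≤ t) (hA : t ≤ A) (hy : 1 ≤ y)
    (h1 : x + 2 * y ≤ M + 2 * g) (h2 : x + y + z ≤ M + s) :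
    A * x + (2 * A - t - 2) * y + t * z ≤ (A - t) * (M + 2 * g) + t * (M + s) - 2 := by
  have i1 := mul_le_mul_of_nonneg_left h1 (sub_nonneg.2 hA)
  have i2 := mul_le_mul_of_nonneg_left h2 ht
  nlinarith

lemma final_tree {A t x y z c0 c1 c2 B : ℚ} (ht : 0 ≤ t) (hA : 0 ≤ A) (hB : t ≤ B)
    (h0 : y ≤ c0) (h1 : y + z ≤ c1) (h2 : x ≤ c2) :
    A * x + B * y + t * z ≤ A * c2 + (B - t) * c0 + t * c1 := by
  have i1 := mul_le_mul_of_nonneg_left h0 (sub_nonneg.2 hB)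
  have i2 := mul_le_mul_of_nonneg_left h1 ht
  have i3 := mul_le_mul_of_nonneg_left h2 hA
  nlinarith

lemma bound_S0 {p t x y z : ℕ} (hp : 3 ≤ p) (ht : 1 ≤ t) (h : NS0 p x y z) :
    Bound p t (((t : ℚ) + 1) * (t + 2) / 2 * x + t * (t + 2) * y + t * z) := by
  obtain ⟨hx0, hy0, hb, -, -⟩ := h
  have htq : (1 : ℚ) ≤ t := by exact_mod_cast ht
  have hyq : (1 : ℚ) ≤ y := by exact_mod_cast hy0
  set A : ℚ := ((t : ℚ) + 1) * (t + 2) / 2 with hA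
  have hB : (t : ℚ) * (t + 2) = 2 * A - t - 2 := by rw [hA]; ring
  have hAt : (t : ℚ) ≤ A := by rw [hA]; nlinarith
  have hBt : (t : ℚ) ≤ 2 * A - t - 2 := by rw [hA]; nlinarith
  rcases hb with ⟨rfl, -⟩ | ⟨a, e, hn, he, hy, hz, hfin⟩
  · omega
  have hN : (1 : ℚ) ≤ 3 ^ a := one_le_pow₀ (by norm_num)
  unfold Bound
  rw [← hA, hB]
  rcases hfin with hx | ⟨h1, h2⟩
  · have hyQ : (y : ℚ) ≤ 3 ^ a := by exact_mod_cast hy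
    have hzQ : (y : ℚ) + z ≤ 3 ^ a + d1 e := by exact_mod_cast hz
    have hxQ : (x : ℚ) ≤ 3 ^ a + d2 e a := by exact_mod_cast hx
    have key := final_tree (A := A) (by linarith) (by linarith) hBt hyQ hzQ hxQ
    interval_cases e
    · refine ⟨a, Or.inr (Or.inl ⟨by omega, Or.inr (key.trans (le_of_eq ?_))⟩)⟩
      simp [d1, d2]; ring
    · refine ⟨a, Or.inr (Or.inr ⟨by omega, Or.inr (key.trans (le_of_eq ?_))⟩)⟩
      simp [d1, d2]; ring
    · refine ⟨a + 1, Or.inl ⟨by omega, key.trans ?_⟩⟩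
      simp [d1, d2, pow_succ]
      nlinarith
  · have h1Q : (x : ℚ) + 2 * y ≤ 3 * 3 ^ a + 2 * d1 e := by exact_mod_cast h1
    have h2Q : (x : ℚ) + y + z ≤ 3 * 3 ^ a + d2 e a := by exact_mod_cast h2
    have key := final_multi (A := A) (by linarith) hAt hyq h1Q h2Q
    interval_cases e
    · refine ⟨a, Or.inr (Or.inl ⟨by omega, Or.inl (key.trans (le_of_eq ?_))⟩)⟩
      simp [d1, d2]; ring
    · refine ⟨a, Or.inr (Or.inr ⟨by omega, Or.inl (key.trans ?_)⟩)⟩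
      simp [d1, d2]; nlinarith
    · refine ⟨a + 1, Or.inl ⟨by omega, key.trans ?_⟩⟩
      simp [d1, d2, pow_succ]
      nlinarith

lemma bound_S1 {p t x u z : ℕ} (hp : 3 ≤ p) (ht : 1 ≤ t) (h : NS1 p x u z) :
    Bound p t (((t : ℚ) + 1) * (t + 2) / 2 * x + t * z) := by
  obtain ⟨hx0, a, e, hn, he, hz0, hz, hu, hv⟩ := h
  have htq : (1 : ℚ) ≤ t := by exact_mod_cast ht
  set A : ℚ := ((t : ℚ) + 1) * (t + 2) / 2 with hA
  have hAt : (t : ℚ) ≤ A := by rw [hA]; nlinarith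
  have hx : x ≤ 3 ^ a := by have := d1_le_one e; omega
  have hxQ : (x : ℚ) ≤ 3 ^ a := by exact_mod_cast hx
  have huQ : (z : ℚ) + x ≤ 3 ^ a + d1 e := by exact_mod_cast hu
  have key : A * x + t * z ≤ A * 3 ^ a + t * d1 e := by
    have i1 := mul_le_mul_of_nonneg_left hxQ (sub_nonneg.2 hAt)
    have i2 := mul_le_mul_of_nonneg_left huQ (by linarith : (0 : ℚ) ≤ t)
    nlinarith
  have hN : (1 : ℚ) ≤ 3 ^ a := one_le_pow₀ (by norm_num)
  unfold Bound
  rw [← hA]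
  interval_cases e
  · obtain ⟨b, rfl⟩ : ∃ b, a = b + 1 := ⟨a - 1, by omega⟩
    refine ⟨b, Or.inr (Or.inr ⟨by omega, Or.inl (key.trans (le_of_eq ?_))⟩)⟩
    simp only [d1, pow_succ, if_true]; push_cast; ring
  · refine ⟨a, Or.inl ⟨by omega, key.trans (le_of_eq ?_)⟩⟩
    simp [d1]
  · refine ⟨a, Or.inr (Or.inl ⟨by omega, Or.inl (key.trans ?_)⟩)⟩
    simp [d1]
    have : (0 : ℚ) ≤ t * (t + 2) + t * (a + 1) := by positivity
    nlinarith

lemma bound_R {p t x u v : ℕ} (hp : 3 ≤ p) (ht : 1 ≤ t) (h : NR p x u v) :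
    Bound p t (((t : ℚ) + 1) * (t + 2) / 2 * x) := by
  obtain ⟨a, e, hn, he, hx0, hx, hu, hv⟩ := h
  have htq : (1 : ℚ) ≤ t := by exact_mod_cast ht
  set A : ℚ := ((t : ℚ) + 1) * (t + 2) / 2 with hA
  have hAt : (t : ℚ) ≤ A := by rw [hA]; nlinarith
  have hxQ : (x : ℚ) ≤ 3 ^ a := by exact_mod_cast hx
  have key : A * x ≤ A * 3 ^ a := mul_le_mul_of_nonneg_left hxQ (by linarith)
  have hN : (1 : ℚ) ≤ 3 ^ a := one_le_pow₀ (by norm_num)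
  unfold Bound
  rw [← hA]
  interval_cases e
  · exact ⟨a, Or.inl ⟨by omega, key⟩⟩
  · refine ⟨a, Or.inr (Or.inl ⟨by omega, Or.inl (key.trans ?_)⟩)⟩
    have : (0 : ℚ) ≤ t * (t + 2) + t * (a + 1) := by positivity
    nlinarith
  · refine ⟨a, Or.inr (Or.inr ⟨by omega, Or.inl (key.trans ?_)⟩)⟩
    nlinarith

/-- Polynomials of paths. -/
noncomputable def Lp : ℕ → Polynomial ℕ
  | 0 => 1
  | 1 => 1 + Polynomial.X
  | 2 => 1 + Polynomial.X + Polynomial.X + Polynomial.X ^ 2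
  | n + 3 => Lp (n + 2) + Polynomial.X * Lp (n + 1) + Polynomial.X * (Polynomial.X * Lp n)

lemma Lp_top (t : ℕ) : (∃ c, 2 * c = (t + 1) * (t + 2) ∧ PTop (Lp (3 * t)) (2 * t) c) ∧
    PTop (Lp (3 * t + 1)) (2 * t + 1) (t + 1) ∧ PTop (Lp (3 * t + 2)) (2 * t + 2) 1 := by
  have h1 : PTop (1 : Polynomial ℕ) 0 1 := by simp [PTop]
  have hX : PTop (Polynomial.X : Polynomial ℕ) 1 1 := ⟨Polynomial.natDegree_X_le, by simp⟩
  have hX2 : PTop (Polynomial.X ^ 2 : Polynomial ℕ) 2 1 := by rw [pow_two]; exact hX.mul hX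
  induction t with
  | zero =>
    refine ⟨⟨1, rfl, h1⟩, ?_, ?_⟩
    · show PTop (1 + Polynomial.X) 1 1
      exact (h1.lift (by norm_num)).add hX |>.cast rfl (by norm_num)
    · show PTop (1 + Polynomial.X + Polynomial.X + Polynomial.X ^ 2) 2 1
      exact (((h1.lift (by norm_num)).add (hX.lift (by norm_num))).add
        (hX.lift (by norm_num))).add hX2 |>.cast rfl (by norm_num)
  | succ t ih =>
    obtain ⟨⟨c, hc, i0⟩, i1, i2⟩ := ih
    have j0 : PTop (Lp (3 * (t + 1))) (2 * (t + 1)) (1 + (t + 1) + c) := by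
      show PTop (Lp (3 * t + 2) + Polynomial.X * Lp (3 * t + 1) + Polynomial.X * (Polynomial.X * Lp (3 * t))) _ _
      exact (i2.add i1.X_mul).add i0.X_mul.X_mul
    have j1 : PTop (Lp (3 * (t + 1) + 1)) (2 * (t + 1) + 1) (t + 1 + 1) := by
      show PTop (Lp (3 * (t + 1)) + Polynomial.X * Lp (3 * t + 2) + Polynomial.X * (Polynomial.X * Lp (3 * t + 1))) _ _
      exact (((j0.lift (by omega)).add i2.X_mul).add i1.X_mul.X_mul).cast rfl (by omega)
    have j2 : PTop (Lp (3 * (t + 1) + 2)) (2 * (t + 1) + 2) 1 := by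
      show PTop (Lp (3 * (t + 1) + 1) + Polynomial.X * Lp (3 * (t + 1)) + Polynomial.X * (Polynomial.X * Lp (3 * t + 2))) _ _
      exact (((j1.lift (by omega)).add (j0.X_mul.lift (by omega))).add i2.X_mul.X_mul).cast rfl (by omega)
    exact ⟨⟨_, by nlinarith, j0⟩, j1, j2⟩

/-- The polynomial of the potted graph: top coefficient bound. -/
lemma potted_poly {p t : ℕ} {P Y Z : Polynomial ℕ} (hp : 3 ≤ p) (hF : Fst p P Y Z) :
    ∃ D c, PTop (P * Lp (3 * (t + 1)) + Polynomial.X * (Y * Lp (3 * t + 1)) +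
      Polynomial.X * (Y * (Polynomial.X * Lp (3 * t) + Polynomial.X * Lp (3 * t)) +
        Z * Lp (3 * t + 1))) D c ∧ 1 ≤ c ∧ Bound p (t + 1) c := by
  obtain ⟨⟨c0, hc0, i0⟩, i1, -⟩ := Lp_top t
  obtain ⟨⟨c1, hc1, j0⟩, -, -⟩ := Lp_top (t + 1)
  have hc0' : (c0 : ℚ) = (t + 1) * (t + 2) / 2 := by
    have : (2 * c0 : ℚ) = (t + 1) * (t + 2) := by exact_mod_cast hc0
    linarith
  have hc1' : (c1 : ℚ) = (t + 1 + 1) * (t + 1 + 2) / 2 := by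
    have : (2 * c1 : ℚ) = (t + 1 + 1) * (t + 1 + 2) := by exact_mod_cast hc1
    linarith
  have hc1p : 1 ≤ c1 := by nlinarith
  rcases hF.inv with ⟨D, x, y, z, hP, hY, hZ, H⟩ | ⟨D, x, u, z, hP, hY, hZ, H⟩ |
      ⟨D, x, u, v, hP, hY, hZ, H⟩
  · refine ⟨D + 2 * (t + 1), x * c1 + y * (t + 1) + (y * (c0 + c0) + z * (t + 1)), ?_, ?_, ?_⟩
    · exact ((hP.mul j0).add ((hY.mul i1).X_mul.cast (by omega) rfl)).add
        (((hY.mul (i0.X_mul.add i0.X_mul)).add (hZ.mul i1)).X_mul.cast (by omega) rfl)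
    · have : 1 ≤ x * c1 := Nat.mul_pos H.1 hc1p
      omega
    · have := bound_S0 hp (Nat.succ_pos t) H
      convert this using 1
      push_cast
      rw [hc0', hc1']
      ring
  · refine ⟨D + 1 + 2 * (t + 1), x * c1 + z * (t + 1), ?_, ?_, ?_⟩
    · exact (((hP.mul j0).add ((hY.mul i1).X_mul.lift (by omega))).add
        ((((hY.mul (i0.X_mul.add i0.X_mul)).lift (by omega)).add (hZ.mul i1)).X_mul.cast (by omega)
          rfl)).cast rfl (by omega)
    · have : 1 ≤ x * c1 := Nat.mul_pos H.1 hc1p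
      omega
    · have := bound_S1 hp (Nat.succ_pos t) H
      convert this using 1
      push_cast
      rw [hc1']
      ring
  · refine ⟨D + 1 + 2 * (t + 1), x * c1, ?_, ?_, ?_⟩
    · exact (((hP.mul j0).add ((hY.mul i1).X_mul.lift (by omega))).add
        (((hY.mul (i0.X_mul.add i0.X_mul)).add (hZ.mul i1)).X_mul.lift (by omega))).cast rfl
          (by omega)
    · have hx1 : 1 ≤ x := by obtain ⟨_, _, _, _, h, _⟩ := H; exact h
      exact Nat.mul_pos hx1 hc1p
    · have := bound_R hp (Nat.succ_pos t) H
      convert this using 1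
      push_cast
      rw [hc1']
      ring

lemma bound_final {n k t : ℕ} {m : ℚ} (hk : k = 3 * t + 1) (hnk : k + 3 ≤ n)
    (h : Bound (n - k) t m) :
    (n % 3 = 0 → m ≤
        1 / 18 * ((k : ℚ) + 2) * ((k : ℚ) + 5) * 3 ^ ((n - k - 2) / 3)) ∧
    (n % 3 = 1 → m ≤
        max (1 / 18 * ((k : ℚ) + 2) * ((k : ℚ) + 5) * 3 ^ ((n - k) / 3)
              + 1 / 9 * ((n : ℚ) + 5) * ((k : ℚ) - 1))
            (1 / 18 * (k : ℚ) * ((k : ℚ) + 5) * 3 ^ ((n - k) / 3) + 1 / 3 * ((k : ℚ) - 1)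
              + 1 / 18 * ((k : ℚ) + 2) * ((k : ℚ) + 5) * (((n : ℚ) - k) / 3 + 1))) ∧
    (n % 3 = 2 → m ≤
        max (1 / 18 * (k : ℚ) * ((k : ℚ) + 5) * 3 ^ ((n - k - 1) / 3)
              + 1 / 18 * ((k : ℚ) + 2) * ((k : ℚ) + 5))
            (1 / 18 * ((k : ℚ) + 2) * ((k : ℚ) + 5) * 3 ^ ((n - k - 1) / 3)
              + 1 / 3 * ((k : ℚ) - 1))) := by
  have hkq : (k : ℚ) = 3 * t + 1 := by rw [hk]; push_cast; ring
  obtain ⟨s, ⟨hs, hm⟩ | ⟨hs, hm⟩ | ⟨hs, hm⟩⟩ := h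
  · refine ⟨fun _ => ?_, fun _ => by omega, fun _ => by omega⟩
    have : (n - k - 2) / 3 = s := by omega
    rw [this, hkq]
    refine hm.trans (le_of_eq (by ring))
  · refine ⟨fun _ => by omega, fun _ => ?_, fun _ => by omega⟩
    have h1 : (n - k) / 3 = s + 1 := by omega
    have h2 : (n : ℚ) = 3 * t + 1 + 3 * s + 3 := by
      have : n = 3 * t + 1 + 3 * s + 3 := by omega
      rw [this]; push_cast; ring
    rw [h1, hkq, h2, le_max_iff, pow_succ]
    rcases hm with hm | hm
    · exact Or.inl (hm.trans (le_of_eq (by ring)))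
    · exact Or.inr (hm.trans (le_of_eq (by ring)))
  · refine ⟨fun _ => by omega, fun _ => by omega, fun _ => ?_⟩
    have h1 : (n - k - 1) / 3 = s + 1 := by omega
    rw [h1, hkq, le_max_iff, pow_succ]
    rcases hm with hm | hm
    · exact Or.inr (hm.trans (le_of_eq (by ring)))
    · exact Or.inl (hm.trans (le_of_eq (by ring)))

lemma isDissoc_iff (G : SimpleGraph V) (s : Finset V) :
    IsDissoc G s ↔ ∀ v ∈ s, ∀ a ∈ s, ∀ b ∈ s, G.Adj v a → G.Adj v b → a = b := by
  unfold IsDissoc nbrCount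
  refine forall₂_congr fun v _ => ?_
  have hf : {w ∈ (s : Set V) | G.Adj v w}.Finite := s.finite_toSet.subset (Set.sep_subset _ _)
  rw [Set.ncard_le_one hf]
  constructor
  · intro h a ha b hb hva hvb
    exact h a ⟨ha, hva⟩ b ⟨hb, hvb⟩
  · intro h a ha b hb
    exact h a ha.1 b hb.1 ha.2 hb.2

/-- Dissociation sets inside `A`. -/
noncomputable def dsets (G : SimpleGraph V) (A : Finset V) : Finset (Finset V) :=
  A.powerset.filter (IsDissoc G)

lemma mem_dsets {G : SimpleGraph V} {A S : Finset V} :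
    S ∈ dsets G A ↔ S ⊆ A ∧ ∀ v ∈ S, ∀ a ∈ S, ∀ b ∈ S, G.Adj v a → G.Adj v b → a = b := by
  rw [dsets, Finset.mem_filter, Finset.mem_powerset, isDissoc_iff]

/-- Generating polynomial of the dissociation sets in `A`. -/
noncomputable def gP (G : SimpleGraph V) (A : Finset V) : Polynomial ℕ :=
  ∑ S ∈ dsets G A, Polynomial.X ^ S.card

noncomputable def gY (G : SimpleGraph V) (A R : Finset V) : Polynomial ℕ := gP G (A \ R)

noncomputable def gZ (G : SimpleGraph V) (A R : Finset V) : Polynomial ℕ :=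
  ∑ r ∈ R, Polynomial.X * gP G ((A \ R).filter (fun w => ¬ G.Adj r w))

lemma gP_empty (G : SimpleGraph V) : gP G ∅ = 1 := by
  have : dsets G ∅ = {∅} := by
    ext S
    rw [mem_dsets, Finset.mem_singleton, Finset.subset_empty]
    constructor
    · exact fun h => h.1
    · rintro rfl
      simp
  rw [gP, this]
  simp

lemma gP_union (G : SimpleGraph V) {A B : Finset V} (hd : Disjoint A B)
    (hn : ∀ a ∈ A, ∀ b ∈ B, ¬ G.Adj a b) : gP G (A ∪ B) = gP G A * gP G B := by
  unfold gP
  rw [Finset.sum_mul_sum, ← Finset.sum_product']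
  symm
  have hdd : ∀ x ∈ A, x ∉ B := fun x h h' => Finset.disjoint_left.1 hd h h'
  refine Finset.sum_bij' (fun p _ => p.1 ∪ p.2) (fun S _ => (S ∩ A, S ∩ B)) ?_ ?_ ?_ ?_ ?_
  · rintro ⟨S, T⟩ h
    rw [Finset.mem_product, mem_dsets, mem_dsets] at h
    obtain ⟨⟨h1, h2⟩, h3, h4⟩ := h
    rw [mem_dsets]
    refine ⟨Finset.union_subset_union h1 h3, ?_⟩
    have hn' : ∀ a ∈ A, ∀ b ∈ B, ¬ G.Adj b a := fun a ha b hb h => hn a ha b hb h.symm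
    intro v hv a ha b hb hva hvb
    simp only [Finset.mem_union] at hv ha hb
    rcases hv with hv | hv
    · have ha' : a ∈ S := ha.resolve_right fun h => hn v (h1 hv) a (h3 h) hva
      have hb' : b ∈ S := hb.resolve_right fun h => hn v (h1 hv) b (h3 h) hvb
      exact h2 v hv a ha' b hb' hva hvb
    · have ha' : a ∈ T := ha.resolve_left fun h => hn' a (h1 h) v (h3 hv) hva
      have hb' : b ∈ T := hb.resolve_left fun h => hn' b (h1 h) v (h3 hv) hvb
      exact h4 v hv a ha' b hb' hva hvb
  · intro S h
    rw [mem_dsets] at h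
    rw [Finset.mem_product, mem_dsets, mem_dsets]
    refine ⟨⟨Finset.inter_subset_right, ?_⟩, Finset.inter_subset_right, ?_⟩ <;>
    · intro v hv a ha b hb
      exact h.2 v (Finset.mem_inter.1 hv).1 a (Finset.mem_inter.1 ha).1 b (Finset.mem_inter.1 hb).1
  · rintro ⟨S, T⟩ h
    rw [Finset.mem_product, mem_dsets, mem_dsets] at h
    obtain ⟨⟨h1, -⟩, h3, -⟩ := h
    simp only at h1 h3 ⊢
    ext x
    · simp only [Finset.mem_inter, Finset.mem_union]
      constructor
      · rintro ⟨h | h, h'⟩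
        · exact h
        · exact absurd (h3 h) (hdd x h')
      · exact fun h => ⟨Or.inl h, h1 h⟩
    · simp only [Finset.mem_inter, Finset.mem_union]
      constructor
      · rintro ⟨h | h, h'⟩
        · exact absurd h' (hdd x (h1 h))
        · exact h
      · exact fun h => ⟨Or.inr h, h3 h⟩
  · intro S h
    rw [mem_dsets] at h
    show S ∩ A ∪ S ∩ B = S
    rw [← Finset.inter_union_distrib_left]
    exact Finset.inter_eq_left.2 h.1
  · rintro ⟨S, T⟩ h
    rw [Finset.mem_product, mem_dsets, mem_dsets] at h
    obtain ⟨⟨h1, -⟩, h3, -⟩ := h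
    show _ = Polynomial.X ^ (S ∪ T).card
    rw [Finset.card_union_of_disjoint (hd.mono h1 h3), pow_add]

lemma gP_insert (G : SimpleGraph V) {v : V} {A R : Finset V} (hv : v ∉ A)
    (hR : R = A.filter (fun w => G.Adj v w)) :
    gP G (insert v A) = gP G A + Polynomial.X * gY G A R + Polynomial.X * gZ G A R := by
  have key : dsets G (insert v A) = dsets G A ∪ ((dsets G (A \ R)).image (insert v) ∪
      R.biUnion (fun r => (dsets G ((A \ R).filter (fun w => ¬ G.Adj r w))).image
        (fun S => insert v (insert r S)))) := by
    ext S
    simp only [Finset.mem_union, Finset.mem_image, Finset.mem_biUnion, mem_dsets]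
    constructor
    · rintro ⟨h1, h2⟩
      by_cases hvS : v ∈ S
      · right
        by_cases hr : ∃ r ∈ S, G.Adj v r
        · right
          obtain ⟨r, hrS, hvr⟩ := hr
          have hrA : r ∈ A := by
            rcases Finset.mem_insert.1 (h1 hrS) with h | h
            · subst h; exact absurd hvr (G.loopless.irrefl _)
            · exact h
          refine ⟨r, by rw [hR]; exact Finset.mem_filter.2 ⟨hrA, hvr⟩, (S.erase v).erase r,
            ⟨?_, ?_⟩, ?_⟩
          · intro x hx
            simp only [Finset.mem_erase] at hx
            obtain ⟨hxr, hxv, hxS⟩ := hx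
            have hxA : x ∈ A := (Finset.mem_insert.1 (h1 hxS)).resolve_left hxv
            rw [hR]
            simp only [Finset.mem_filter, Finset.mem_sdiff]
            refine ⟨⟨hxA, fun h => hxr (h2 v hvS x hxS r hrS h.2 hvr)⟩, fun h => ?_⟩
            exact hxv (h2 r hrS x hxS v hvS h hvr.symm)
          · intro x hx a ha b hb
            simp only [Finset.mem_erase] at hx ha hb
            exact h2 x hx.2.2 a ha.2.2 b hb.2.2
          · rw [Finset.insert_erase (Finset.mem_erase.2 ⟨hvr.ne', hrS⟩), Finset.insert_erase hvS]
        · left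
          push Not at hr
          refine ⟨S.erase v, ⟨?_, ?_⟩, Finset.insert_erase hvS⟩
          · intro x hx
            simp only [Finset.mem_erase] at hx
            have hxA : x ∈ A := (Finset.mem_insert.1 (h1 hx.2)).resolve_left hx.1
            rw [hR]
            simp only [Finset.mem_filter, Finset.mem_sdiff]
            exact ⟨hxA, fun h => hr x hx.2 h.2⟩
          · intro x hx a ha b hb
            simp only [Finset.mem_erase] at hx ha hb
            exact h2 x hx.2 a ha.2 b hb.2
      · left
        refine ⟨fun x hx => (Finset.mem_insert.1 (h1 hx)).resolve_left ?_, h2⟩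
        rintro rfl
        exact hvS hx
    · rintro (⟨h1, h2⟩ | ⟨T, ⟨h1, h2⟩, rfl⟩ | ⟨r, hr, T, ⟨h1, h2⟩, rfl⟩)
      · exact ⟨h1.trans (Finset.subset_insert _ _), h2⟩
      · refine ⟨Finset.insert_subset_insert _ (h1.trans Finset.sdiff_subset), ?_⟩
        have hT : ∀ x ∈ T, ¬ G.Adj v x := by
          intro x hx hvx
          have := h1 hx
          rw [hR] at this
          simp only [Finset.mem_filter, Finset.mem_sdiff] at this
          exact this.2 ⟨this.1, hvx⟩
        intro x hx a ha b hb hxa hxb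
        simp only [Finset.mem_insert] at hx ha hb
        grind [G.symm, G.loopless, SimpleGraph.adj_comm]
      · rw [hR, Finset.mem_filter] at hr
        have hT : ∀ x ∈ T, ¬ G.Adj v x ∧ ¬ G.Adj r x ∧ x ∈ A := by
          intro x hx
          have := h1 hx
          rw [hR] at this
          simp only [Finset.mem_filter, Finset.mem_sdiff] at this
          exact ⟨fun hvx => this.1.2 ⟨this.1.1, hvx⟩, this.2, this.1.1⟩
        refine ⟨Finset.insert_subset_insert _ (Finset.insert_subset hr.1 fun x hx => (hT x hx).2.2),
          ?_⟩
        have hl : ∀ x, ¬ G.Adj x x := fun x => G.loopless.irrefl x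
        intro x hx a ha b hb hxa hxb
        simp only [Finset.mem_insert] at hx ha hb
        grind [SimpleGraph.adj_comm]
  have hsub : ∀ {B S : Finset V}, S ∈ dsets G B → S ⊆ B := fun h => (mem_dsets.1 h).1
  have hvd : ∀ {B : Finset V}, B ⊆ A → ∀ S ∈ dsets G B, v ∉ S :=
    fun hB S hS h => hv (hB (hsub hS h))
  have hAR : A \ R ⊆ A := Finset.sdiff_subset
  have hRA : R ⊆ A := by rw [hR]; exact Finset.filter_subset _ _
  have hARf : ∀ r, (A \ R).filter (fun w => ¬ G.Adj r w) ⊆ A :=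
    fun r => (Finset.filter_subset _ _).trans hAR
  have hrT : ∀ r ∈ R, ∀ T ∈ dsets G ((A \ R).filter (fun w => ¬ G.Adj r w)),
      ∀ r' ∈ R, r' ∉ T := by
    intro r hr T hT r' hr' h
    have := hsub hT h
    simp only [Finset.mem_filter, Finset.mem_sdiff] at this
    exact this.1.2 hr'
  have hvR : v ∉ R := fun h => hv (hRA h)
  unfold gZ gY gP
  rw [key, Finset.sum_union, Finset.sum_union, Finset.sum_image, Finset.sum_biUnion, ← add_assoc]
  · congr 1
    · congr 1
      rw [Finset.mul_sum]
      refine Finset.sum_congr rfl fun S hS => ?_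
      rw [Finset.card_insert_of_notMem (hvd hAR S hS), pow_succ, mul_comm]
    · rw [Finset.mul_sum]
      refine Finset.sum_congr rfl fun r hr => ?_
      rw [Finset.sum_image, Finset.mul_sum, Finset.mul_sum]
      · refine Finset.sum_congr rfl fun S hS => ?_
        rw [Finset.card_insert_of_notMem, Finset.card_insert_of_notMem (hrT r hr S hS r hr),
          pow_succ, pow_succ]
        · ring
        · rw [Finset.mem_insert, not_or]
          refine ⟨?_, hvd (hARf r) S hS⟩
          rintro rfl
          exact hvR hr
      · intro S hS T hT h
        have e1 := hrT r hr S hS r hr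
        have e2 := hrT r hr T hT r hr
        have e3 := hvd (hARf r) S hS
        have e4 := hvd (hARf r) T hT
        simp only at h
        have hne : v ≠ r := by rintro rfl; exact hvR hr
        ext x
        have := Finset.ext_iff.1 h x
        simp only [Finset.mem_insert] at this
        by_cases h1 : x = v
        · subst h1; simp [e3, e4]
        · by_cases h2 : x = r
          · subst h2; simp [e1, e2]
          · simpa [h1, h2] using this
  · intro r hr r' hr' hne
    simp only [Function.onFun]
    rw [Finset.disjoint_left]
    intro S hS hS'
    obtain ⟨T, hT, rfl⟩ := Finset.mem_image.1 hS
    obtain ⟨T', hT', h⟩ := Finset.mem_image.1 hS'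
    have h1 : r' ∈ insert v (insert r T) := by rw [← h]; simp
    simp only [Finset.mem_insert] at h1
    rcases h1 with h1 | h1 | h1
    · exact hvR (h1 ▸ hr')
    · exact hne h1.symm
    · exact hrT r hr T hT r' hr' h1
  · intro S hS T hT h
    have e3 := hvd hAR S hS
    have e4 := hvd hAR T hT
    rw [← Finset.erase_insert e3, ← Finset.erase_insert e4]
    exact congrArg (fun U => Finset.erase U v) h
  · rw [Finset.disjoint_left]
    intro S hS hS'
    obtain ⟨T, hT, rfl⟩ := Finset.mem_image.1 hS
    obtain ⟨r, hr, hS'⟩ := Finset.mem_biUnion.1 hS'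
    obtain ⟨T', hT', h⟩ := Finset.mem_image.1 hS'
    have h1 : r ∈ insert v T := by rw [← h]; simp
    rcases Finset.mem_insert.1 h1 with h1 | h1
    · exact hvR (h1 ▸ hr)
    · exact (Finset.mem_sdiff.1 (hsub hT h1)).2 hr
  · rw [Finset.disjoint_left]
    intro S hS hS'
    refine hvd (Finset.Subset.refl A) S hS ?_
    rcases Finset.mem_union.1 hS' with hS' | hS'
    · obtain ⟨T, hT, rfl⟩ := Finset.mem_image.1 hS'
      exact Finset.mem_insert_self _ _
    · obtain ⟨r, hr, hS'⟩ := Finset.mem_biUnion.1 hS'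
      obtain ⟨T', hT', rfl⟩ := Finset.mem_image.1 hS'
      exact Finset.mem_insert_self _ _

lemma gY_union (G : SimpleGraph V) {A B R R' : Finset V} (hd : Disjoint A B)
    (hn : ∀ a ∈ A, ∀ b ∈ B, ¬ G.Adj a b) (hR : R ⊆ A) (hR' : R' ⊆ B) :
    gY G (A ∪ B) (R ∪ R') = gY G A R * gY G B R' := by
  have h : (A ∪ B) \ (R ∪ R') = (A \ R) ∪ (B \ R') := by
    have := Finset.disjoint_left.1 hd
    ext x
    have := @hR x
    have := @hR' x
    simp only [Finset.mem_sdiff, Finset.mem_union]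
    grind
  unfold gY
  rw [h]
  exact gP_union G (hd.mono Finset.sdiff_subset Finset.sdiff_subset) fun a ha b hb =>
    hn a (Finset.sdiff_subset ha) b (Finset.sdiff_subset hb)

lemma gZ_union (G : SimpleGraph V) {A B R R' : Finset V} (hd : Disjoint A B)
    (hn : ∀ a ∈ A, ∀ b ∈ B, ¬ G.Adj a b) (hR : R ⊆ A) (hR' : R' ⊆ B) :
    gZ G (A ∪ B) (R ∪ R') = gY G A R * gZ G B R' + gZ G A R * gY G B R' := by
  have h : (A ∪ B) \ (R ∪ R') = (A \ R) ∪ (B \ R') := by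
    have := Finset.disjoint_left.1 hd
    ext x
    have := @hR x
    have := @hR' x
    simp only [Finset.mem_sdiff, Finset.mem_union]
    grind
  unfold gY gZ
  rw [h, Finset.sum_union (hd.mono hR hR'), add_comm, Finset.mul_sum, Finset.sum_mul]
  refine congrArg₂ (· + ·) ?_ ?_
  · refine Finset.sum_congr rfl fun r hr => ?_
    have : (A \ R ∪ B \ R').filter (fun w => ¬ G.Adj r w) =
        (A \ R) ∪ (B \ R').filter (fun w => ¬ G.Adj r w) := by
      rw [Finset.filter_union, Finset.filter_true_of_mem]
      intro x hx h
      exact hn x (Finset.sdiff_subset hx) r (hR' hr) h.symm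
    rw [this, gP_union]
    · ring
    · exact hd.mono Finset.sdiff_subset ((Finset.filter_subset _ _).trans Finset.sdiff_subset)
    · exact fun a ha b hb => hn a (Finset.sdiff_subset ha) b
        (Finset.sdiff_subset (Finset.filter_subset _ _ hb))
  · refine Finset.sum_congr rfl fun r hr => ?_
    have : (A \ R ∪ B \ R').filter (fun w => ¬ G.Adj r w) =
        (A \ R).filter (fun w => ¬ G.Adj r w) ∪ (B \ R') := by
      rw [Finset.filter_union, Finset.filter_true_of_mem (s := B \ R')]
      intro x hx h
      exact hn r (hR hr) x (Finset.sdiff_subset hx) h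
    rw [this, gP_union]
    · ring
    · exact hd.mono ((Finset.filter_subset _ _).trans Finset.sdiff_subset) Finset.sdiff_subset
    · exact fun a ha b hb => hn a (Finset.sdiff_subset (Finset.filter_subset _ _ ha)) b
        (Finset.sdiff_subset hb)

lemma gY_tree (G : SimpleGraph V) {v : V} {A : Finset V} (hv : v ∉ A) :
    gY G (insert v A) {v} = gP G A := by
  unfold gY
  rw [Finset.insert_sdiff_of_mem _ (Finset.mem_singleton_self v), Finset.sdiff_singleton_eq_erase,
    Finset.erase_eq_of_notMem hv]

lemma gZ_tree (G : SimpleGraph V) {v : V} {A R : Finset V} (hv : v ∉ A)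
    (hR : R = A.filter (fun w => G.Adj v w)) :
    gZ G (insert v A) {v} = Polynomial.X * gY G A R := by
  unfold gZ gY
  rw [Finset.sum_singleton, Finset.insert_sdiff_of_mem _ (Finset.mem_singleton_self v),
    Finset.sdiff_singleton_eq_erase, Finset.erase_eq_of_notMem hv, Finset.filter_not, hR]

lemma gP_path (G : SimpleGraph V) (p : ℕ → V) (lo hi : ℕ)
    (hinj : ∀ i j, lo ≤ i → i < hi → lo ≤ j → j < hi → p i = p j → i = j)
    (hadj : ∀ i j, lo ≤ i → i < hi → lo ≤ j → j < hi →
      (G.Adj (p i) (p j) ↔ (i + 1 = j ∨ j + 1 = i))) :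
    ∀ len a, lo ≤ a → a + len ≤ hi → gP G ((Finset.Ico a (a + len)).image p) = Lp len := by
  have hins : ∀ a len, (Finset.Ico a (a + (len + 1))).image p =
      insert (p a) ((Finset.Ico (a + 1) (a + 1 + len)).image p) := by
    intro a len
    rw [← Finset.image_insert]
    congr 1
    ext x
    simp only [Finset.mem_Ico, Finset.mem_insert]
    omega
  have hnot : ∀ a len, lo ≤ a → a + (len + 1) ≤ hi →
      p a ∉ (Finset.Ico (a + 1) (a + 1 + len)).image p := by
    intro a len h1 h2 h
    obtain ⟨i, hi, he⟩ := Finset.mem_image.1 h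
    rw [Finset.mem_Ico] at hi
    have := hinj i a (by omega) (by omega) (by omega) (by omega) he
    omega
  have hnb : ∀ a len, lo ≤ a → a + (len + 2) ≤ hi →
      ({p (a + 1)} : Finset V) = ((Finset.Ico (a + 1) (a + 1 + (len + 1))).image p).filter
        (fun w => G.Adj (p a) w) := by
    intro a len h1 h2
    ext x
    simp only [Finset.mem_singleton, Finset.mem_filter, Finset.mem_image, Finset.mem_Ico]
    constructor
    · rintro rfl
      exact ⟨⟨a + 1, by omega, rfl⟩,
        (hadj a (a + 1) (by omega) (by omega) (by omega) (by omega)).2 (Or.inl rfl)⟩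
    · rintro ⟨⟨i, hi, rfl⟩, h⟩
      rw [hadj a i (by omega) (by omega) (by omega) (by omega)] at h
      congr 1
      omega
  have hsd : ∀ a len, lo ≤ a → a + (len + 1) ≤ hi →
      ((Finset.Ico a (a + (len + 1))).image p) \ {p a} =
        ((Finset.Ico (a + 1) (a + 1 + len)).image p) := by
    intro a len h1 h2
    rw [hins, Finset.insert_sdiff_of_mem _ (Finset.mem_singleton_self _),
      Finset.sdiff_singleton_eq_erase, Finset.erase_eq_of_notMem (hnot a len h1 h2)]
  intro len
  induction len using Nat.strong_induction_on with
  | _ len ih =>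
    intro a h1 h2
    match len, ih, h2 with
    | 0, ih, h2 => simp [gP_empty, Lp]
    | 1, ih, h2 =>
      rw [show a + 1 = a + (0 + 1) by rfl, hins,
        gP_insert G (R := ∅) (hnot a 0 h1 h2) (by simp)]
      simp [gY, gZ, gP_empty, Lp]
    | 2, ih, h2 =>
      rw [show a + 2 = a + (1 + 1) by rfl, hins,
        gP_insert G (hnot a 1 h1 h2) (hnb a 0 h1 (by omega))]
      rw [gY, gZ, Finset.sum_singleton, hsd (a + 1) 0 (by omega) (by omega),
        ih 1 (by omega) (a + 1) (by omega) (by omega)]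
      simp [gP_empty, Lp, pow_two]
    | m + 3, ih, h2 =>
      rw [show a + (m + 3) = a + (m + 2 + 1) by rfl, hins,
        gP_insert G (hnot a _ h1 h2) (hnb a (m + 1) h1 (by omega))]
      rw [gY, gZ, Finset.sum_singleton, hsd (a + 1) (m + 1) (by omega) (by omega), Finset.filter_not,
        ← hnb (a + 1) m (by omega) (by omega), hsd (a + 1 + 1) m (by omega) (by omega),
        ih (m + 2) (by omega) (a + 1) (by omega) (by omega),
        ih (m + 1) (by omega) (a + 1 + 1) (by omega) (by omega),
        ih m (by omega) (a + 1 + 1 + 1) (by omega) (by omega)]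
      rw [Lp]

/-- Connectivity inside `A`. -/
def CN (G : SimpleGraph V) (A : Finset V) (a b : V) : Prop :=
  Relation.ReflTransGen (fun x y => G.Adj x y ∧ x ∈ A ∧ y ∈ A) a b

lemma CN.mono {G : SimpleGraph V} {A B : Finset V} (h : A ⊆ B) {a b : V} (hc : CN G A a b) :
    CN G B a b :=
  Relation.ReflTransGen.mono (fun _ _ h' => ⟨h'.1, h h'.2.1, h h'.2.2⟩) _ _ hc

/-- `A` induces a forest, with `R` containing exactly one vertex of each component. -/
structure RF (G : SimpleGraph V) (A R : Finset V) : Prop where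
  sub : R ⊆ A
  ex : ∀ a ∈ A, ∃ r ∈ R, CN G A r a
  un : ∀ r ∈ R, ∀ r' ∈ R, r ≠ r' → ¬ CN G A r r'
  ac : ∀ v ∈ A, ∀ r ∈ A, ∀ r' ∈ A, r ≠ r' → G.Adj v r → G.Adj v r' → ¬ CN G (A.erase v) r r'

lemma RF.fst (G : SimpleGraph V) : ∀ (n : ℕ) (A R : Finset V), A.card = n → RF G A R →
    Fst n (gP G A) (gY G A R) (gZ G A R) := by
  intro n
  induction n using Nat.strong_induction_on with
  | _ n ih =>
    intro A R hn h
    rcases R.eq_empty_or_nonempty with hR | ⟨v, hvR⟩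
    · have hA : A = ∅ := by
        rw [Finset.eq_empty_iff_forall_notMem]
        intro a ha
        obtain ⟨r, hr, -⟩ := h.ex a ha
        rw [hR] at hr
        simp at hr
      subst hA hR
      simp at hn
      subst hn
      simp only [gY, gZ, Finset.sdiff_empty, gP_empty, Finset.sum_empty]
      exact Fst.nil
    have hvA := h.sub hvR
    set C := A.filter (fun a => CN G A v a) with hC
    set A1 := C.erase v with hA1
    set A2 := A.filter (fun a => ¬ CN G A v a) with hA2
    set R1 := A.filter (fun a => G.Adj v a) with hR1
    set R2 := R.erase v with hR2
    have hvC : v ∈ C := Finset.mem_filter.2 ⟨hvA, Relation.ReflTransGen.refl⟩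
    have hvA1 : v ∉ A1 := Finset.notMem_erase _ _
    have hCins : insert v A1 = C := Finset.insert_erase hvC
    have hCA : C ⊆ A := Finset.filter_subset _ _
    have hA1A : A1 ⊆ A := (Finset.erase_subset _ _).trans hCA
    have hA1e : A1 ⊆ A.erase v := Finset.erase_subset_erase _ hCA
    have hA2A : A2 ⊆ A := Finset.filter_subset _ _
    have hun : C ∪ A2 = A := Finset.filter_union_filter_not_eq _ _
    have hdis : Disjoint C A2 := Finset.disjoint_filter_filter_not _ _ _
    have hno : ∀ a ∈ C, ∀ b ∈ A2, ¬ G.Adj a b := by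
      intro a ha b hb hab
      rw [hC, Finset.mem_filter] at ha
      rw [hA2, Finset.mem_filter] at hb
      exact hb.2 (ha.2.tail ⟨hab, ha.1, hb.1⟩)
    have hR1A1 : R1 ⊆ A1 := by
      intro r hr
      rw [hR1, Finset.mem_filter] at hr
      rw [hA1, Finset.mem_erase, hC, Finset.mem_filter]
      exact ⟨hr.2.ne', hr.1, Relation.ReflTransGen.single ⟨hr.2, hvA, hr.1⟩⟩
    have hR1' : R1 = A1.filter (fun a => G.Adj v a) := by
      ext x
      constructor
      · intro hx
        exact Finset.mem_filter.2 ⟨hR1A1 hx, (Finset.mem_filter.1 hx).2⟩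
      · intro hx
        have hx := Finset.mem_filter.1 hx
        exact Finset.mem_filter.2 ⟨hA1A hx.1, hx.2⟩
    have hR2A2 : R2 ⊆ A2 := by
      intro r hr
      rw [hR2, Finset.mem_erase] at hr
      exact Finset.mem_filter.2 ⟨h.sub hr.2, h.un v hvR r hr.2 hr.1.symm⟩
    have hRun : {v} ∪ R2 = R := by
      rw [← Finset.insert_eq]
      exact Finset.insert_erase hvR
    have Q1 : RF G A1 R1 := by
      refine ⟨hR1A1, ?_, ?_, ?_⟩
      · have : ∀ a, CN G A v a → a = v ∨ ∃ r ∈ R1, CN G A1 r a := by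
          intro a ha
          induction ha with
          | refl => exact Or.inl rfl
          | @tail b c hvb hbc ihb =>
            by_cases hcv : c = v
            · exact Or.inl hcv
            right
            by_cases hbv : b = v
            · subst hbv
              exact ⟨c, Finset.mem_filter.2 ⟨hbc.2.2, hbc.1⟩, Relation.ReflTransGen.refl⟩
            · obtain ⟨r, hr, hrb⟩ := ihb.resolve_left hbv
              refine ⟨r, hr, hrb.tail ⟨hbc.1, ?_, ?_⟩⟩
              · exact Finset.mem_erase.2 ⟨hbv, Finset.mem_filter.2 ⟨hbc.2.1, hvb⟩⟩
              · exact Finset.mem_erase.2 ⟨hcv, Finset.mem_filter.2 ⟨hbc.2.2, hvb.tail hbc⟩⟩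
        intro a ha
        rw [hA1, Finset.mem_erase, hC, Finset.mem_filter] at ha
        exact (this a ha.2.2).resolve_left ha.1
      · intro r hr r' hr' hne hc
        rw [hR1, Finset.mem_filter] at hr hr'
        exact h.ac v hvA r hr.1 r' hr'.1 hne hr.2 hr'.2 (hc.mono hA1e)
      · intro w hw r hr r' hr' hne h1 h2 hc
        exact h.ac w (hA1A hw) r (hA1A hr) r' (hA1A hr') hne h1 h2
          (hc.mono (Finset.erase_subset_erase _ hA1A))
    have Q2 : RF G A2 R2 := by
      refine ⟨hR2A2, ?_, ?_, ?_⟩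
      · intro a ha
        rw [hA2, Finset.mem_filter] at ha
        obtain ⟨r, hr, hra⟩ := h.ex a ha.1
        have hrv : r ≠ v := by
          rintro rfl
          exact ha.2 hra
        refine ⟨r, Finset.mem_erase.2 ⟨hrv, hr⟩, ?_⟩
        clear hr hrv
        induction hra using Relation.ReflTransGen.head_induction_on with
        | refl => exact Relation.ReflTransGen.refl
        | @head x y hxy hya ihy =>
          refine Relation.ReflTransGen.head ⟨hxy.1, ?_, ?_⟩ ihy
          · exact Finset.mem_filter.2 ⟨hxy.2.1, fun hv => ha.2 ((hv.tail hxy).trans hya)⟩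
          · exact Finset.mem_filter.2 ⟨hxy.2.2, fun hv => ha.2 (hv.trans hya)⟩
      · intro r hr r' hr' hne hc
        exact h.un r (Finset.mem_of_mem_erase hr) r' (Finset.mem_of_mem_erase hr') hne
          (hc.mono hA2A)
      · intro w hw r hr r' hr' hne h1 h2 hc
        exact h.ac w (hA2A hw) r (hA2A hr) r' (hA2A hr') hne h1 h2
          (hc.mono (Finset.erase_subset_erase _ hA2A))
    have hcard : A1.card + A2.card + 1 = n := by
      rw [← hn, ← hun, Finset.card_union_of_disjoint hdis, ← hCins,
        Finset.card_insert_of_notMem hvA1]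
      omega
    have F := Fst.cons (ih A1.card (by omega) A1 R1 rfl Q1) (ih A2.card (by omega) A2 R2 rfl Q2)
    have hvC' : ({v} : Finset V) ⊆ C := Finset.singleton_subset_iff.2 hvC
    have e1 : gP G A = (gP G A1 + Polynomial.X * gY G A1 R1 + Polynomial.X * gZ G A1 R1) *
        gP G A2 := by
      rw [← hun, gP_union G hdis hno, ← hCins, gP_insert G hvA1 hR1']
    have e2 : gY G A R = gP G A1 * gY G A2 R2 := by
      rw [← hun, ← hRun, gY_union G hdis hno hvC' hR2A2, ← hCins, gY_tree G hvA1]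
    have e3 : gZ G A R = gP G A1 * gZ G A2 R2 + Polynomial.X * gY G A1 R1 * gY G A2 R2 := by
      rw [← hun, ← hRun, gZ_union G hdis hno hvC' hR2A2, ← hCins, gY_tree G hvA1,
        gZ_tree G hvA1 hR1']
    rw [e1, e2, e3, ← hcard]
    exact F

/-- In a connected graph with as many edges as vertices, a closed route leaving the cycle is
impossible. -/
lemma kill [Finite V] (G : SimpleGraph V) (hconn : G.Connected)
    (hcard : G.edgeSet.ncard = Nat.card V) {u : V} (c : G.Walk u u) (hc : c.IsCycle)
    {A : Finset V} {v r r' : V} (hvA : v ∉ A) (hr : r ∉ c.support) (hvr : G.Adj v r)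
    (hvr' : G.Adj v r') (hne : r ≠ r') (hcn : CN G A r r') : False := by
  have hre : (G.deleteEdges {s(v, r)}).Reachable v r := by
    have h1 : (G.deleteEdges {s(v, r)}).Adj v r' := by
      rw [SimpleGraph.deleteEdges_adj]
      refine ⟨hvr', ?_⟩
      simp only [Set.mem_singleton_iff, Sym2.eq_iff]
      rintro (⟨-, h⟩ | ⟨h, -⟩)
      · exact hne h.symm
      · exact hvr.ne h
    have h2 : (G.deleteEdges {s(v, r)}).Reachable r r' := by
      rw [SimpleGraph.reachable_iff_reflTransGen]
      refine Relation.ReflTransGen.mono ?_ _ _ hcn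
      rintro x y ⟨hxy, hx, hy⟩
      rw [SimpleGraph.deleteEdges_adj]
      refine ⟨hxy, ?_⟩
      simp only [Set.mem_singleton_iff, Sym2.eq_iff]
      rintro (⟨h, -⟩ | ⟨-, h⟩)
      · exact hvA (h ▸ hx)
      · exact hvA (h ▸ hy)
    exact h1.reachable.trans h2.symm
  have hnb : ¬ G.IsBridge s(v, r) := by
    rw [SimpleGraph.isBridge_iff, not_not]
    exact hre
  have hC1 := hconn.connected_delete_edge_of_not_isBridge hnb
  have hces : ∀ e ∈ c.edges, e ∉ ({s(v, r)} : Set (Sym2 V)) := by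
    intro e he h
    rw [Set.mem_singleton_iff] at h
    subst h
    exact hr (c.snd_mem_support_of_mem_edges he)
  have hc1 := SimpleGraph.Walk.IsCycle.toDeleteEdges G {s(v, r)} hc hces
  set G1 := G.deleteEdges {s(v, r)} with hG1
  set c1 := c.toDeleteEdges {s(v, r)} hces
  have hsnd := c1.adj_snd hc1.not_nil
  have hmem : s(u, c1.snd) ∈ c1.edges := c1.mk_start_snd_mem_edges hc1.not_nil
  have hnb1 : ¬ G1.IsBridge s(u, c1.snd) := fun h => h.notMem_edges_of_isCycle hc1 hmem
  have hC2 := hC1.connected_delete_edge_of_not_isBridge hnb1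
  have hle := hC2.card_vert_le_card_edgeSet_add_one
  rw [Nat.card_coe_set_eq, SimpleGraph.edgeSet_deleteEdges] at hle
  have e1 := Set.ncard_sdiff_singleton_add_one (s := G1.edgeSet) (a := s(u, c1.snd)) hsnd
    (Set.toFinite _)
  have e2 := Set.ncard_sdiff_singleton_add_one (s := G.edgeSet) (a := s(v, r)) hvr
    (Set.toFinite _)
  rw [← SimpleGraph.edgeSet_deleteEdges, ← hG1] at e2
  omega

lemma coeff_gP (G : SimpleGraph V) (A : Finset V) (d : ℕ) :
    (gP G A).coeff d = ((dsets G A).filter (fun S => S.card = d)).card := by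
  rw [gP, Polynomial.finsetSum_coeff, Finset.card_filter]
  refine Finset.sum_congr rfl fun S _ => ?_
  rw [Polynomial.coeff_X_pow]
  simp [eq_comm]

lemma numMax_eq [Fintype V] (G : SimpleGraph V) {D c : ℕ} (h : PTop (gP G Finset.univ) D c)
    (hc : 1 ≤ c) : numMaxDissoc G = c := by
  have hd : dissNumOn G Set.univ = D := by
    unfold dissNumOn
    apply IsGreatest.csSup_eq
    constructor
    · have h2 := h.2
      rw [coeff_gP] at h2
      obtain ⟨S, hS⟩ := Finset.card_pos.1 (lt_of_lt_of_eq hc h2.symm)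
      rw [Finset.mem_filter, dsets, Finset.mem_filter] at hS
      exact ⟨S, Set.subset_univ _, hS.1.2, hS.2⟩
    · rintro m ⟨S, -, hS, rfl⟩
      by_contra hlt
      push Not at hlt
      have h0 := Polynomial.coeff_eq_zero_of_natDegree_lt (h.1.trans_lt hlt)
      rw [coeff_gP, Finset.card_eq_zero] at h0
      have : S ∈ (dsets G Finset.univ).filter (fun T => T.card = S.card) := by
        rw [Finset.mem_filter, dsets, Finset.mem_filter]
        exact ⟨⟨Finset.mem_powerset.2 (Finset.subset_univ _), hS⟩, rfl⟩
      rw [h0] at this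
      simp at this
  rw [← h.2, coeff_gP, numMaxDissoc, numMaxDissocOn, Nat.card_eq_fintype_card, Fintype.card_subtype]
  congr 1
  ext S
  simp [IsMaxDissocOn, hd, dsets]

/-- The key structural fact: the generating polynomial of a potted graph. -/
lemma potted_struct [Fintype V] (G : SimpleGraph V) {n k t : ℕ} (hn : Fintype.card V = n)
    (hk : k = 3 * t + 4) (hG : IsPotted G k) :
    ∃ P Y Z, Fst (n - k) P Y Z ∧ gP G Finset.univ = P * Lp (3 * (t + 1)) +
      Polynomial.X * (Y * Lp (3 * t + 1)) +
      Polynomial.X * (Y * (Polynomial.X * Lp (3 * t) + Polynomial.X * Lp (3 * t)) +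
        Z * Lp (3 * t + 1)) := by
  obtain ⟨hconn, hcard, v0, c0, hc0, hlen0, u, ⟨hus, hu2⟩, huniq⟩ := hG
  obtain ⟨c, hc, hlen, hsup⟩ : ∃ c : G.Walk u u, c.IsCycle ∧ c.length = k ∧
      ∀ x ∈ c.support, x ∈ c0.support := by
    refine ⟨c0.rotate u hus, hc0.rotate hus, by rw [SimpleGraph.Walk.length_rotate, hlen0], ?_⟩
    intro x hx
    exact (SimpleGraph.Walk.mem_support_rotate_iff c0 u hus).1 hx
  obtain ⟨p, hp⟩ : ∃ p : ℕ → V, p = c.getVert := ⟨_, rfl⟩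
  have hp0 : p 0 = u := by rw [hp]; exact c.getVert_zero
  have hpk : p k = u := by rw [hp, ← hlen]; exact c.getVert_length
  have hinj : ∀ i j, i < k → j < k → p i = p j → i = j := by
    intro i j hi hj h
    rw [hp] at h
    refine hc.getVert_injOn' ?_ ?_ h
    · show i ≤ c.length - 1
      omega
    · show j ≤ c.length - 1
      omega
  have hnu : ∀ i, 1 ≤ i → i < k → p i ≠ u := by
    intro i h1 h2 h
    have := hinj i 0 h2 (by omega) (h.trans hp0.symm)
    omega
  have hps : ∀ i, p i ∈ c.support := by
    intro i
    rw [hp]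
    exact c.getVert_mem_support i
  have hnb : ∀ i, 1 ≤ i → i < k → ∀ x, G.Adj (p i) x ↔ x = p (i - 1) ∨ x = p (i + 1) := by
    intro i h1 h2
    have e1 := hc.ncard_neighborSet_toSubgraph_eq_two (hps i)
    have e2 := hc.neighborSet_toSubgraph_internal (i := i) (by omega) (by omega)
    rw [← hp] at e2
    have e3 : ¬ 2 < (G.neighborSet (p i)).ncard := fun h =>
      hnu i h1 h2 (huniq (p i) ⟨hsup _ (hps i), h⟩)
    have e4 := Set.eq_of_subset_of_ncard_le (c.toSubgraph.neighborSet_subset (p i))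
      (by omega) (Set.toFinite _)
    intro x
    rw [← SimpleGraph.mem_neighborSet, ← e4, e2]
    rfl
  have hadj : ∀ i j, 1 ≤ i → i < k → 1 ≤ j → j < k →
      (G.Adj (p i) (p j) ↔ (i + 1 = j ∨ j + 1 = i)) := by
    intro i j hi hi' hj hj'
    rw [hnb i hi hi']
    constructor
    · rintro (h | h)
      · have := hinj _ _ hj' (by omega) h
        omega
      · by_cases hik : i + 1 = k
        · rw [hik, hpk] at h
          exact absurd h (hnu j hj hj')
        · have := hinj _ _ hj' (by omega) h
          omega
    · rintro (h | h)
      · right; rw [h]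
      · left; rw [← h]; rfl
  have hadju : ∀ j, 1 ≤ j → j < k → (G.Adj u (p j) ↔ (j = 1 ∨ j + 1 = k)) := by
    intro j hj hj'
    rw [SimpleGraph.adj_comm, hnb j hj hj']
    constructor
    · rintro (h | h)
      · left
        have := hinj 0 (j - 1) (by omega) (by omega) (hp0.trans h)
        omega
      · right
        by_contra hjk
        exact hnu (j + 1) (by omega) (by omega) h.symm
    · rintro (h | h)
      · left; rw [h]; exact hp0.symm
      · right; rw [h]; exact hpk.symm
  set C := (Finset.Ico 1 k).image p with hC
  have memC : ∀ x, x ∈ C ↔ ∃ i, (1 ≤ i ∧ i < k) ∧ p i = x := by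
    intro x
    simp only [hC, Finset.mem_image, Finset.mem_Ico]
  have huC : u ∉ C := by
    intro h
    obtain ⟨i, hi, h⟩ := (memC u).1 h
    exact hnu i hi.1 hi.2 h
  have hpC : ∀ i, i ≤ k → p i ∈ insert u C := by
    intro i hi
    rw [Finset.mem_insert, memC]
    rcases Nat.eq_zero_or_pos i with h | h
    · left; rw [h, hp0]
    · rcases hi.eq_or_lt with h' | h'
      · left; rw [h', hpk]
      · exact Or.inr ⟨i, ⟨h, h'⟩, rfl⟩
  have hCcard : C.card = k - 1 := by
    rw [hC, Finset.card_image_of_injOn, Nat.card_Ico]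
    intro i hi j hj h
    simp only [Finset.coe_Ico, Set.mem_Ico] at hi hj
    exact hinj i j hi.2 hj.2 h
  have hsupC : ∀ x ∈ c.support, x ∈ insert u C := by
    intro x hx
    obtain ⟨i, hi, hik⟩ := SimpleGraph.Walk.mem_support_iff_exists_getVert.1 hx
    rw [← hi, ← hp]
    exact hpC i (by omega)
  set F := Finset.univ \ insert u C with hF
  have memF : ∀ x, x ∈ F ↔ x ≠ u ∧ x ∉ C := by
    intro x
    simp [hF]
  have hFcard : F.card = n - k := by
    rw [hF, Finset.card_sdiff_of_subset (Finset.subset_univ _), Finset.card_univ, hn,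
      Finset.card_insert_of_notMem huC, hCcard]
    omega
  set R := F.filter (fun w => G.Adj u w) with hR
  set R' := C.filter (fun w => G.Adj u w) with hR'
  have hFsup : ∀ x ∈ F, x ∉ c.support := by
    intro x hx h
    have := hsupC x h
    rw [Finset.mem_insert] at this
    rw [memF] at hx
    tauto
  have hCnb : ∀ x ∈ C, ∀ y, G.Adj x y → y ∈ insert u C := by
    intro x hx y hxy
    obtain ⟨i, hi, rfl⟩ := (memC x).1 hx
    rcases (hnb i hi.1 hi.2 y).1 hxy with h | h
    · rw [h]; exact hpC _ (by omega)
    · rw [h]; exact hpC _ (by omega)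
  have hdis : Disjoint F C := by
    rw [Finset.disjoint_left]
    intro x hx
    exact ((memF x).1 hx).2
  have hno : ∀ a ∈ F, ∀ b ∈ C, ¬ G.Adj a b := by
    intro a ha b hb hab
    have := hCnb b hb a hab.symm
    rw [Finset.mem_insert] at this
    rw [memF] at ha
    tauto
  have huF : u ∉ F := fun h => ((memF u).1 h).1 rfl
  have hQ : RF G F R := by
    refine ⟨Finset.filter_subset _ _, ?_, ?_, ?_⟩
    · have key : ∀ x, Relation.ReflTransGen G.Adj u x → x ∈ insert u C ∨ ∃ r ∈ R, CN G F r x := by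
        intro x hx
        induction hx with
        | refl => exact Or.inl (Finset.mem_insert_self _ _)
        | @tail b a hub hba ihb =>
          by_cases ha : a ∈ insert u C
          · exact Or.inl ha
          right
          have haF : a ∈ F := Finset.mem_sdiff.2 ⟨Finset.mem_univ _, ha⟩
          by_cases hb : b ∈ insert u C
          · rcases Finset.mem_insert.1 hb with hb | hb
            · subst hb
              exact ⟨a, Finset.mem_filter.2 ⟨haF, hba⟩, Relation.ReflTransGen.refl⟩
            · exact absurd (hCnb b hb a hba) ha
          · obtain ⟨r, hr, hrb⟩ := ihb.resolve_left hb
            exact ⟨r, hr, hrb.tail ⟨hba, Finset.mem_sdiff.2 ⟨Finset.mem_univ _, hb⟩, haF⟩⟩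
      intro a ha
      refine (key a ?_).resolve_left (Finset.mem_sdiff.1 ha).2
      exact (SimpleGraph.reachable_iff_reflTransGen u a).1 (hconn.preconnected u a)
    · intro r hr r' hr' hne hcn
      have hr := Finset.mem_filter.1 hr
      have hr' := Finset.mem_filter.1 hr'
      exact kill G hconn hcard c hc huF (hFsup r hr.1) hr.2 hr'.2 hne hcn
    · intro v hv r hr r' hr' hne h1 h2 hcn
      exact kill G hconn hcard c hc (Finset.notMem_erase v F) (hFsup r hr) h1 h2 hne hcn
  have hunion : insert u (F ∪ C) = Finset.univ := by
    rw [← Finset.union_insert, hF]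
    exact Finset.sdiff_union_of_subset (Finset.subset_univ _)
  have hinj1 : ∀ i j, 1 ≤ i → i < k → 1 ≤ j → j < k → p i = p j → i = j :=
    fun i j _ hi _ hj h => hinj i j hi hj h
  have path := gP_path G p 1 k hinj1 hadj
  have hR'eq : R' = {p 1, p (k - 1)} := by
    ext x
    simp only [hR', Finset.mem_filter, memC, Finset.mem_insert, Finset.mem_singleton]
    constructor
    · rintro ⟨⟨i, hi, rfl⟩, h⟩
      rcases (hadju i hi.1 hi.2).1 h with h | h
      · left; rw [h]
      · right; congr 1; omega
    · rintro (rfl | rfl)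
      · exact ⟨⟨1, by omega, rfl⟩, (hadju 1 (by omega) (by omega)).2 (by omega)⟩
      · exact ⟨⟨k - 1, by omega, rfl⟩, (hadju (k - 1) (by omega) (by omega)).2 (by omega)⟩
  have hCR : C \ R' = (Finset.Ico 2 (2 + (3 * t + 1))).image p := by
    ext x
    simp only [hR', Finset.mem_filter, Finset.mem_sdiff, memC, Finset.mem_image, Finset.mem_Ico]
    constructor
    · rintro ⟨⟨i, hi, rfl⟩, h⟩
      refine ⟨i, ?_, rfl⟩
      have : ¬ (i = 1 ∨ i + 1 = k) := fun h' => h ⟨⟨i, hi, rfl⟩, (hadju i hi.1 hi.2).2 h'⟩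
      omega
    · rintro ⟨i, hi, rfl⟩
      refine ⟨⟨i, by omega, rfl⟩, fun h => ?_⟩
      have := (hadju i (by omega) (by omega)).1 h.2
      omega
  have hf1 : (C \ R').filter (fun w => ¬ G.Adj (p 1) w) =
      (Finset.Ico 3 (3 + 3 * t)).image p := by
    rw [hCR]
    ext x
    simp only [Finset.mem_filter, Finset.mem_image, Finset.mem_Ico]
    constructor
    · rintro ⟨⟨i, hi, rfl⟩, h⟩
      rw [hadj 1 i (by omega) (by omega) (by omega) (by omega)] at h
      exact ⟨i, by omega, rfl⟩
    · rintro ⟨i, hi, rfl⟩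
      refine ⟨⟨i, by omega, rfl⟩, ?_⟩
      rw [hadj 1 i (by omega) (by omega) (by omega) (by omega)]
      omega
  have hf2 : (C \ R').filter (fun w => ¬ G.Adj (p (k - 1)) w) =
      (Finset.Ico 2 (2 + 3 * t)).image p := by
    rw [hCR]
    ext x
    simp only [Finset.mem_filter, Finset.mem_image, Finset.mem_Ico]
    constructor
    · rintro ⟨⟨i, hi, rfl⟩, h⟩
      rw [hadj (k - 1) i (by omega) (by omega) (by omega) (by omega)] at h
      exact ⟨i, by omega, rfl⟩
    · rintro ⟨i, hi, rfl⟩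
      refine ⟨⟨i, by omega, rfl⟩, ?_⟩
      rw [hadj (k - 1) i (by omega) (by omega) (by omega) (by omega)]
      omega
  have gPC : gP G C = Lp (3 * (t + 1)) := by
    have := path (3 * (t + 1)) 1 le_rfl (by omega)
    rwa [show 1 + 3 * (t + 1) = k by omega] at this
  have gYC : gY G C R' = Lp (3 * t + 1) := by
    rw [gY, hCR]
    exact path (3 * t + 1) 2 (by omega) (by omega)
  have gZC : gZ G C R' = Polynomial.X * Lp (3 * t) + Polynomial.X * Lp (3 * t) := by
    have hne : p 1 ≠ p (k - 1) := by
      intro h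
      have := hinj _ _ (by omega) (by omega) h
      omega
    have hs : gZ G C R' = ∑ r ∈ ({p 1, p (k - 1)} : Finset V),
        Polynomial.X * gP G ((C \ R').filter (fun w => ¬ G.Adj r w)) := by
      rw [gZ]
      exact Finset.sum_congr hR'eq fun _ _ => rfl
    rw [hs, Finset.sum_pair hne, hf1, hf2, path (3 * t) 3 (by omega) (by omega),
      path (3 * t) 2 (by omega) (by omega)]
  refine ⟨gP G F, gY G F R, gZ G F R, RF.fst G _ F R hFcard hQ, ?_⟩
  have huFC : u ∉ F ∪ C := by
    rw [Finset.mem_union, not_or]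
    exact ⟨huF, huC⟩
  have hRR : R ∪ R' = (F ∪ C).filter (fun w => G.Adj u w) := (Finset.filter_union _ _ _).symm
  rw [← hunion, gP_insert G huFC hRR, gP_union G hdis hno,
    gY_union G hdis hno (Finset.filter_subset _ _) (Finset.filter_subset _ _),
    gZ_union G hdis hno (Finset.filter_subset _ _) (Finset.filter_subset _ _), gPC, gYC, gZC]

theorem potted_bound_k_mod3_eq_1 {V : Type*} [Fintype V] (G : SimpleGraph V) (n k : ℕ)
    (hn : Fintype.card V = n) (hk0 : 0 < k) (hk4 : 4 ≤ k) (hkmod : k % 3 = 1)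
    (hnk : k + 3 ≤ n) (hG : IsPotted G k) :
    (n % 3 = 0 → (numMaxDissoc G : ℚ) ≤
        1 / 18 * ((k : ℚ) + 2) * ((k : ℚ) + 5) * 3 ^ ((n - k - 2) / 3)) ∧
    (n % 3 = 1 → (numMaxDissoc G : ℚ) ≤
        max (1 / 18 * ((k : ℚ) + 2) * ((k : ℚ) + 5) * 3 ^ ((n - k) / 3)
              + 1 / 9 * ((n : ℚ) + 5) * ((k : ℚ) - 1))
            (1 / 18 * (k : ℚ) * ((k : ℚ) + 5) * 3 ^ ((n - k) / 3) + 1 / 3 * ((k : ℚ) - 1)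
              + 1 / 18 * ((k : ℚ) + 2) * ((k : ℚ) + 5) * (((n : ℚ) - k) / 3 + 1))) ∧
    (n % 3 = 2 → (numMaxDissoc G : ℚ) ≤
        max (1 / 18 * (k : ℚ) * ((k : ℚ) + 5) * 3 ^ ((n - k - 1) / 3)
              + 1 / 18 * ((k : ℚ) + 2) * ((k : ℚ) + 5))
            (1 / 18 * ((k : ℚ) + 2) * ((k : ℚ) + 5) * 3 ^ ((n - k - 1) / 3)
              + 1 / 3 * ((k : ℚ) - 1))) := by
  obtain ⟨t, ht⟩ : ∃ t, k = 3 * t + 4 := ⟨(k - 4) / 3, by omega⟩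
  obtain ⟨P, Y, Z, hF, hP⟩ := potted_struct G hn ht hG
  obtain ⟨D, c, hT, hc, hb⟩ := potted_poly (t := t) (by omega) hF
  rw [← hP] at hT
  rw [numMax_eq G hT hc]
  exact bound_final (t := t + 1) (by omega) hnk hb
end

section
/- Let G be a potted graph whose cycle C_k has length k, let u be the unique vertex of C_k of degree greater than 2, and suppose G − C_k has connected components T₁, …, T_r, where for each i the vertex v_i ∈ V(T_i) is adjacent to u in G. Then m(G) = m(G,u⁻) + m(G,u⁰) + m(G,u¹), where m(G,u⁻) = m(C_k,u⁻) · ∏_{i=1}^{r} m(T_i), m(G,u⁰) = m(C_k,u⁰) · ∏_{i=1}^{r} m̄(T_i − v_i), and m(G,u¹) = m(C_k,u¹) · ∏_{i=1}^{r} m̄(T_i − v_i) + m(C_k,u⁰) · Σ_{j=1}^{r} [ m̄(T_j − N_{T_j}(v_j)) · ∏_{i ≠ j} m̄(T_i − v_i) ]. -/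
open scoped Classical

variable {V : Type*}

/-- `T` is the vertex set of a connected component of the subgraph of `G` induced by `A`:
it is a maximal connected subset of `A`. -/
def IsCompOf (G : SimpleGraph V) (A T : Set V) : Prop :=
  T ⊆ A ∧ T.Nonempty ∧ (G.induce T).Connected ∧
    ∀ T' : Set V, T ⊆ T' → T' ⊆ A → (G.induce T').Connected → T' = T

section parts
variable {V : Type*} [Fintype V]

/-- The part of `s` inside `A`. -/
noncomputable def part (s : Finset V) (A : Set V) : Finset V := s.filter (· ∈ A)

theorem mem_part {s : Finset V} {A : Set V} {x : V} : x ∈ part s A ↔ x ∈ s ∧ x ∈ A := by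
  simp [part]

theorem nbrCount_eq (G : SimpleGraph V) (s : Finset V) (w : V) :
    nbrCount G s w = (s.filter (fun x => G.Adj w x)).card := by
  unfold nbrCount
  rw [← Set.ncard_coe_finset]
  congr 1
  ext x; simp

theorem nbrCount_mono (G : SimpleGraph V) {s t : Finset V} (h : s ⊆ t) (w : V) :
    nbrCount G s w ≤ nbrCount G t w := by
  rw [nbrCount_eq, nbrCount_eq]
  exact Finset.card_le_card (Finset.filter_subset_filter _ h)

theorem IsDissoc.mono {G : SimpleGraph V} {s t : Finset V} (h : s ⊆ t) (ht : IsDissoc G t) :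
    IsDissoc G s := fun w hw => (nbrCount_mono G h w).trans (ht w (h hw))

theorem bdd_diss (G : SimpleGraph V) (A : Set V) :
    BddAbove {n | ∃ s : Finset V, ↑s ⊆ A ∧ IsDissoc G s ∧ s.card = n} := by
  refine ⟨Fintype.card V, ?_⟩
  rintro n ⟨s, -, -, rfl⟩
  exact Finset.card_le_univ s

theorem card_le_diss {G : SimpleGraph V} {A : Set V} {s : Finset V} (hs : ↑s ⊆ A)
    (hd : IsDissoc G s) : s.card ≤ dissNumOn G A :=
  le_csSup (bdd_diss G A) ⟨s, hs, hd, rfl⟩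

theorem exists_max (G : SimpleGraph V) (A : Set V) : ∃ s, IsMaxDissocOn G A s := by
  have := Nat.sSup_mem (s := {n | ∃ s : Finset V, ↑s ⊆ A ∧ IsDissoc G s ∧ s.card = n})
    ⟨0, ∅, by simp, by intro v hv; simp at hv, by simp⟩ (bdd_diss G A)
  obtain ⟨s, h1, h2, h3⟩ := this
  exact ⟨s, h1, h2, h3⟩

theorem diss_mono (G : SimpleGraph V) {A B : Set V} (h : B ⊆ A) :
    dissNumOn G B ≤ dissNumOn G A := by
  obtain ⟨s, h1, h2, h3⟩ := exists_max G B
  rw [← h3]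
  exact card_le_diss (h1.trans h) h2

theorem mbar_eq (G : SimpleGraph V) {A B : Set V} (h : B ⊆ A) :
    mbar G A B = Nat.card {s : Finset V // IsMaxDissocOn G A s ∧ ↑s ⊆ B} := by
  unfold mbar
  split_ifs with hd
  · unfold numMaxDissocOn
    refine Nat.card_congr (Equiv.subtypeEquivRight fun s => ?_)
    unfold IsMaxDissocOn
    rw [hd]
    constructor
    · rintro ⟨h1, h2, h3⟩
      exact ⟨⟨h1.trans h, h2, h3⟩, h1⟩
    · rintro ⟨⟨h1, h2, h3⟩, h4⟩
      exact ⟨h4, h2, h3⟩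
  · symm
    rw [Nat.card_eq_zero]
    left
    constructor
    rintro ⟨s, ⟨h1, h2, h3⟩, h4⟩
    have := card_le_diss h4 h2
    have := diss_mono G h
    omega

theorem mbar_del (G : SimpleGraph V) (A : Set V) (v : V) :
    mbar G A (A \ {v}) = Nat.card {s : Finset V // IsMaxDissocOn G A s ∧ v ∉ s} := by
  rw [mbar_eq G Set.sdiff_subset]
  refine Nat.card_congr (Equiv.subtypeEquivRight fun s => ?_)
  refine and_congr_right fun hs => ?_
  constructor
  · intro h hv
    exact (h hv).2 rfl
  · intro hv x hx
    refine ⟨hs.1 hx, ?_⟩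
    rintro rfl
    exact hv hx

theorem nbrCount_eq_zero {G : SimpleGraph V} {s : Finset V} {w : V} :
    nbrCount G s w = 0 ↔ ∀ x ∈ s, ¬ G.Adj w x := by
  rw [nbrCount_eq, Finset.card_eq_zero, Finset.filter_eq_empty_iff]

theorem mbar_nbr (G : SimpleGraph V) (A : Set V) (v : V) (hvA : v ∈ A) :
    mbar G A (A \ G.neighborSet v) =
      Nat.card {s : Finset V // IsMaxDissocOn G A s ∧ v ∈ s ∧ nbrCount G s v = 0} := by
  rw [mbar_eq G Set.sdiff_subset]
  refine Nat.card_congr (Equiv.subtypeEquivRight fun s => ?_)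
  refine and_congr_right fun hs => ?_
  rw [nbrCount_eq_zero]
  constructor
  · intro h
    have hn : ∀ x ∈ s, ¬ G.Adj v x := fun x hx ha => (h hx).2 ha
    refine ⟨?_, hn⟩
    by_contra hv
    have hd : IsDissoc G (insert v s) := by
      intro w hw
      rw [nbrCount_eq, Finset.filter_insert]
      rcases Finset.mem_insert.1 hw with rfl | hw
      · have := nbrCount_eq_zero.2 hn
        rw [nbrCount_eq] at this
        simp [this]
      · have h1 := hs.2.1 w hw
        rw [nbrCount_eq] at h1
        rw [if_neg (fun ha => hn w hw ha.symm)]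
        exact h1
    have := card_le_diss (A := A) (by
      rw [Finset.coe_insert]
      exact Set.insert_subset hvA hs.1) hd
    rw [Finset.card_insert_of_notMem hv, hs.2.2] at this
    omega
  · rintro ⟨hv, hn⟩ x hx
    exact ⟨hs.1 hx, fun ha => hn x hx ha⟩

/-- Counting sets determined by their parts. -/
theorem count_parts {ι : Type*} [Fintype ι] (P : ι → Set V)
    (hP : ∀ x, ∃! i, x ∈ P i) (Q : ι → Finset V → Prop)
    (hQ : ∀ i s, Q i s → ↑s ⊆ P i) :
    Nat.card {s : Finset V // ∀ i, Q i (part s (P i))} = ∏ i, Nat.card {s // Q i s} := by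
  rw [← Nat.card_pi]
  have key : ∀ (g : ∀ i, {s // Q i s}) (i : ι),
      part (Finset.univ.biUnion fun j => (g j).1) (P i) = (g i).1 := by
    intro g i
    ext x
    simp only [mem_part, Finset.mem_biUnion, Finset.mem_univ, true_and]
    constructor
    · rintro ⟨⟨j, hj⟩, hx⟩
      have := (hP x).unique (hQ j _ (g j).2 hj) hx
      subst this; exact hj
    · intro hx
      exact ⟨⟨i, hx⟩, hQ i _ (g i).2 hx⟩
  refine Nat.card_congr
    { toFun := fun s i => ⟨part s.1 (P i), s.2 i⟩
      invFun := fun g => ⟨Finset.univ.biUnion fun j => (g j).1, fun i => by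
        rw [key]; exact (g i).2⟩
      left_inv := ?_
      right_inv := ?_ }
  · rintro ⟨s, hs⟩
    ext x
    simp only [mem_part, Finset.mem_biUnion, Finset.mem_univ, true_and]
    constructor
    · rintro ⟨i, h, _⟩; exact h
    · intro h
      obtain ⟨i, hi, _⟩ := hP x
      exact ⟨i, h, hi⟩
  · intro g
    funext i
    exact Subtype.ext (key g i)

theorem card_parts {ι : Type*} [Fintype ι] (P : ι → Set V)
    (hP : ∀ x, ∃! i, x ∈ P i) (s : Finset V) : s.card = ∑ i, (part s (P i)).card := by
  rw [← Finset.card_biUnion]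
  · congr 1
    ext x
    simp only [mem_part, Finset.mem_biUnion, Finset.mem_univ, true_and]
    constructor
    · intro h
      obtain ⟨i, hi, _⟩ := hP x
      exact ⟨i, h, hi⟩
    · rintro ⟨i, h, _⟩; exact h
  · intro i _ j _ hij
    rw [Function.onFun, Finset.disjoint_left]
    intro x hx hy
    exact hij ((hP x).unique (mem_part.1 hx).2 (mem_part.1 hy).2)

theorem count_exists {ι : Type*} [Fintype ι] (X : Finset V → Prop) (R : ι → Finset V → Prop)
    (hX : ∀ s, X s ↔ ∃ j, R j s) (hR : ∀ s i j, R i s → R j s → i = j) :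
    Nat.card {s // X s} = ∑ j, Nat.card {s // R j s} := by
  rw [← Nat.card_sigma]
  symm
  refine Nat.card_congr (Equiv.ofBijective
    (fun p : (Σ j, {s // R j s}) => (⟨p.2.1, (hX _).2 ⟨p.1, p.2.2⟩⟩ : {s // X s})) ⟨?_, ?_⟩)
  · rintro ⟨i, s, hs⟩ ⟨j, t, ht⟩ h
    have h' : s = t := congrArg Subtype.val h
    subst h'
    have := hR s i j hs ht
    subst this
    rfl
  · rintro ⟨s, hs⟩
    obtain ⟨j, hj⟩ := (hX s).1 hs
    exact ⟨⟨j, s, hj⟩, rfl⟩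

theorem part_subset (s : Finset V) (A : Set V) : part s A ⊆ s := Finset.filter_subset _ _

theorem part_sub (s : Finset V) (A : Set V) : ↑(part s A) ⊆ A := fun _ hx => (mem_part.1 hx).2

end parts
section glue
variable {V : Type*} [Fintype V]

theorem exists_glue {ι : Type*} [Fintype ι] (P : ι → Set V)
    (hP : ∀ x, ∃! i, x ∈ P i) (g : ι → Finset V) (hg : ∀ i, ↑(g i) ⊆ P i) :
    ∃ s : Finset V, ∀ i, part s (P i) = g i := by
  refine ⟨Finset.univ.biUnion g, fun i => ?_⟩
  ext x
  simp only [mem_part, Finset.mem_biUnion, Finset.mem_univ, true_and]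
  constructor
  · rintro ⟨⟨j, hj⟩, hx⟩
    have := (hP x).unique (hg j hj) hx
    subst this; exact hj
  · intro hx
    exact ⟨⟨i, hx⟩, hg i hx⟩

/-- The pieces of the decomposition: the cycle and the components. -/
def pieces {r : ℕ} (C : Set V) (T : Fin r → Set V) : Option (Fin r) → Set V
  | none => C
  | some i => T i

/-- The structural facts about potted graphs used in the counting. -/
structure Decomp (G : SimpleGraph V) {r : ℕ} (C : Set V) (T : Fin r → Set V) (u : V)
    (v : Fin r → V) : Prop where
  huC : u ∈ C
  hv : ∀ i, v i ∈ T i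
  hadj : ∀ i, G.Adj u (v i)
  hP : ∀ x, ∃! i, x ∈ pieces C T i
  hTT : ∀ i j x y, x ∈ T i → y ∈ T j → G.Adj x y → i = j
  hCT : ∀ i x y, x ∈ C → y ∈ T i → G.Adj x y → x = u ∧ y = v i
  hmax : ∃ s, IsMaxDissocOn G C s ∧ u ∉ s

namespace Decomp
variable {G : SimpleGraph V} {r : ℕ} {C : Set V} {T : Fin r → Set V} {u : V} {v : Fin r → V}

theorem cases (h : Decomp G C T u v) (x : V) : x ∈ C ∨ ∃ i, x ∈ T i := by
  obtain ⟨i, hi, -⟩ := h.hP x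
  cases i with
  | none => exact Or.inl hi
  | some i => exact Or.inr ⟨i, hi⟩

theorem disj (h : Decomp G C T u v) {x : V} {i : Fin r} (hx : x ∈ C) (hy : x ∈ T i) : False := by
  have := (h.hP x).unique (y₁ := none) (y₂ := some i) hx hy
  cases this

theorem disjT (h : Decomp G C T u v) {x : V} {i j : Fin r} (hx : x ∈ T i) (hy : x ∈ T j) :
    i = j := by
  have := (h.hP x).unique (y₁ := some i) (y₂ := some j) hx hy
  simpa using this

theorem nb_C (h : Decomp G C T u v) (s : Finset V) {w : V} (hw : w ∈ C)
    (hwu : w = u → ∀ i, v i ∉ s) : nbrCount G s w = nbrCount G (part s C) w := by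
  rw [nbrCount_eq, nbrCount_eq]
  congr 1
  ext x
  simp only [Finset.mem_filter, mem_part]
  constructor
  · rintro ⟨hx, ha⟩
    refine ⟨⟨hx, ?_⟩, ha⟩
    rcases h.cases x with hx' | ⟨i, hi⟩
    · exact hx'
    · obtain ⟨h1, h2⟩ := h.hCT i w x hw hi ha
      subst h2
      exact absurd hx (hwu h1 i)
  · rintro ⟨⟨hx, -⟩, ha⟩
    exact ⟨hx, ha⟩

theorem nb_T (h : Decomp G C T u v) (s : Finset V) {w : V} {i : Fin r} (hw : w ∈ T i)
    (hwu : w = v i → u ∉ s) : nbrCount G s w = nbrCount G (part s (T i)) w := by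
  rw [nbrCount_eq, nbrCount_eq]
  congr 1
  ext x
  simp only [Finset.mem_filter, mem_part]
  constructor
  · rintro ⟨hx, ha⟩
    refine ⟨⟨hx, ?_⟩, ha⟩
    rcases h.cases x with hx' | ⟨j, hj⟩
    · obtain ⟨h1, h2⟩ := h.hCT i x w hx' hw ha.symm
      subst h1
      exact absurd hx (hwu h2)
    · rw [h.hTT i j w x hw hj ha]
      exact hj
  · rintro ⟨⟨hx, -⟩, ha⟩
    exact ⟨hx, ha⟩

theorem nb_v (h : Decomp G C T u v) (s : Finset V) (hu : u ∈ s) (i : Fin r) :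
    nbrCount G s (v i) = nbrCount G (part s (T i)) (v i) + 1 := by
  have hue : u ∉ (part s (T i)).filter (fun x => G.Adj (v i) x) := by
    simp only [Finset.mem_filter, mem_part]
    rintro ⟨⟨_, h1⟩, _⟩
    exact h.disj h.huC h1
  rw [nbrCount_eq, nbrCount_eq, ← Finset.card_insert_of_notMem hue]
  congr 1
  ext x
  simp only [Finset.mem_filter, mem_part, Finset.mem_insert]
  constructor
  · rintro ⟨hx, ha⟩
    rcases h.cases x with hx' | ⟨j, hj⟩
    · exact Or.inl (h.hCT i x _ hx' (h.hv i) ha.symm).1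
    · right
      rw [h.hTT i j _ x (h.hv i) hj ha]
      refine ⟨⟨hx, hj⟩, ?_⟩
      rw [← h.hTT i j _ x (h.hv i) hj ha]
      exact ha
  · rintro (rfl | ⟨⟨hx, -⟩, ha⟩)
    · exact ⟨hu, (h.hadj i).symm⟩
    · exact ⟨hx, ha⟩

theorem nb_u (h : Decomp G C T u v) (s : Finset V) :
    nbrCount G s u = nbrCount G (part s C) u + (Finset.univ.filter (fun i => v i ∈ s)).card := by
  have hinj : Function.Injective v := fun i j hij => h.disjT (h.hv i) (hij ▸ h.hv j)
  rw [nbrCount_eq, nbrCount_eq, ← Finset.card_image_of_injective _ hinj, ← Finset.card_union_of_disjoint]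
  · congr 1
    ext x
    simp only [Finset.mem_filter, mem_part, Finset.mem_union, Finset.mem_image, Finset.mem_univ,
      true_and]
    constructor
    · rintro ⟨hx, ha⟩
      rcases h.cases x with hx' | ⟨j, hj⟩
      · exact Or.inl ⟨⟨hx, hx'⟩, ha⟩
      · have := (h.hCT j u x h.huC hj ha).2
        subst this
        exact Or.inr ⟨j, hx, rfl⟩
    · rintro (⟨⟨hx, -⟩, ha⟩ | ⟨i, hi, rfl⟩)
      · exact ⟨hx, ha⟩
      · exact ⟨hi, h.hadj i⟩
  · rw [Finset.disjoint_left]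
    simp only [Finset.mem_filter, mem_part, Finset.mem_image, Finset.mem_univ, true_and]
    rintro x ⟨⟨_, hx⟩, _⟩ ⟨i, _, rfl⟩
    exact h.disj hx (h.hv i)

theorem dissoc_away (h : Decomp G C T u v) {s : Finset V} (hu : u ∉ s) :
    IsDissoc G s ↔ ∀ i, IsDissoc G (part s (pieces C T i)) := by
  constructor
  · intro hs i
    exact hs.mono (part_subset _ _)
  · intro hs w hw
    rcases h.cases w with hC | ⟨i, hi⟩
    · rw [h.nb_C s hC (fun he => absurd (he ▸ hw) hu)]
      exact hs none w (mem_part.2 ⟨hw, hC⟩)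
    · rw [h.nb_T s hi (fun _ => hu)]
      exact hs (some i) w (mem_part.2 ⟨hw, hi⟩)

theorem dissoc_mem (h : Decomp G C T u v) {s : Finset V} (hu : u ∈ s) :
    IsDissoc G s ↔ (∀ i, IsDissoc G (part s (pieces C T i))) ∧ nbrCount G s u ≤ 1 ∧
      ∀ i, v i ∈ s → nbrCount G (part s (T i)) (v i) = 0 := by
  constructor
  · intro hs
    refine ⟨fun i => hs.mono (part_subset _ _), hs u hu, fun i hi => ?_⟩
    have := hs _ hi
    rw [h.nb_v s hu i] at this
    omega
  · rintro ⟨hs, h1, h2⟩ w hw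
    rcases h.cases w with hC | ⟨i, hi⟩
    · by_cases hwu : w = u
      · rw [hwu]; exact h1
      rw [h.nb_C s hC (fun he => absurd he hwu)]
      exact hs none w (mem_part.2 ⟨hw, hC⟩)
    · by_cases hwv : w = v i
      · subst hwv
        rw [h.nb_v s hu i, h2 i hw]
      rw [h.nb_T s hi (fun he => absurd he hwv)]
      exact hs (some i) w (mem_part.2 ⟨hw, hi⟩)

theorem diss_sum (h : Decomp G C T u v) :
    dissNumOn G Set.univ = ∑ i, dissNumOn G (pieces C T i) := by
  apply le_antisymm
  · obtain ⟨s, _, h2, h3⟩ := exists_max G Set.univ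
    rw [← h3, card_parts _ h.hP s]
    exact Finset.sum_le_sum fun i _ =>
      card_le_diss (part_sub _ _) (h2.mono (part_subset _ _))
  · have : ∀ i, ∃ t, IsMaxDissocOn G (pieces C T i) t ∧ u ∉ t := by
      intro i
      cases i with
      | none => exact h.hmax
      | some i =>
        obtain ⟨t, ht⟩ := exists_max G (T i)
        exact ⟨t, ht, fun hut => h.disj h.huC (ht.1 hut)⟩
    choose g hg hgu using this
    obtain ⟨s, hs⟩ := exists_glue _ h.hP g (fun i => (hg i).1)
    have hus : u ∉ s := by
      intro hu
      apply hgu none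
      rw [← hs none]
      exact mem_part.2 ⟨hu, h.huC⟩
    have hd : IsDissoc G s := (h.dissoc_away hus).2 fun i => by
      rw [hs i]; exact (hg i).2.1
    have := card_le_diss (Set.subset_univ _) hd
    rw [card_parts _ h.hP s] at this
    refine le_trans (le_of_eq ?_) this
    refine Finset.sum_congr rfl fun i _ => ?_
    rw [hs i, (hg i).2.2]

theorem max_iff (h : Decomp G C T u v) (s : Finset V) : IsMaxDissocOn G Set.univ s ↔
    IsDissoc G s ∧ ∀ i, IsMaxDissocOn G (pieces C T i) (part s (pieces C T i)) := by
  constructor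
  · rintro ⟨_, h2, h3⟩
    refine ⟨h2, fun i => ⟨part_sub _ _, h2.mono (part_subset _ _), ?_⟩⟩
    rw [card_parts _ h.hP s, h.diss_sum] at h3
    exact (Finset.sum_eq_sum_iff_of_le fun i _ =>
      card_le_diss (part_sub _ _) (h2.mono (part_subset _ _))).1 h3 i (Finset.mem_univ _)
  · rintro ⟨h1, h2⟩
    refine ⟨Set.subset_univ _, h1, ?_⟩
    rw [card_parts _ h.hP s, h.diss_sum]
    exact Finset.sum_congr rfl fun i _ => (h2 i).2.2

theorem mem_C (h : Decomp G C T u v) (s : Finset V) : u ∈ part s C ↔ u ∈ s := by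
  simp [mem_part, h.huC]

theorem mem_T (h : Decomp G C T u v) (s : Finset V) (i : Fin r) :
    v i ∈ part s (T i) ↔ v i ∈ s := by
  simp [mem_part, h.hv i]

theorem count_away (h : Decomp G C T u v) : numMaxDissocAway G u
    = numMaxDissocOnAway G C u * ∏ i, numMaxDissocOn G (T i) := by
  let Q : Option (Fin r) → Finset V → Prop
    | none => fun t => IsMaxDissocOn G C t ∧ u ∉ t
    | some i => fun t => IsMaxDissocOn G (T i) t
  have := count_parts (pieces C T) h.hP Q (by
    rintro (_ | i) s hs
    · exact hs.1.1
    · exact hs.1)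
  rw [Fintype.prod_option] at this
  refine Eq.trans (Nat.card_congr (Equiv.subtypeEquivRight fun s => ?_)) this
  rw [h.max_iff, Option.forall, Option.forall]
  change _ ↔ (IsMaxDissocOn G C (part s C) ∧ u ∉ part s C) ∧
    ∀ i, IsMaxDissocOn G (T i) (part s (T i))
  rw [h.mem_C]
  constructor
  · rintro ⟨⟨h1, h2, h3⟩, h4⟩
    exact ⟨⟨h2, h4⟩, h3⟩
  · rintro ⟨⟨h2, h4⟩, h3⟩
    refine ⟨⟨(h.dissoc_away h4).2 ?_, h2, h3⟩, h4⟩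
    rintro (_ | i)
    · exact h2.2.1
    · exact (h3 i).2.1

theorem count_deg0 (h : Decomp G C T u v) : numMaxDissocDeg0 G u
    = numMaxDissocOnDeg0 G C u * ∏ i, mbar G (T i) (T i \ {v i}) := by
  simp only [mbar_del]
  let Q : Option (Fin r) → Finset V → Prop
    | none => fun t => IsMaxDissocOn G C t ∧ u ∈ t ∧ nbrCount G t u = 0
    | some i => fun t => IsMaxDissocOn G (T i) t ∧ v i ∉ t
  have := count_parts (pieces C T) h.hP Q (by
    rintro (_ | i) s hs
    · exact hs.1.1
    · exact hs.1.1)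
  rw [Fintype.prod_option] at this
  refine Eq.trans (Nat.card_congr (Equiv.subtypeEquivRight fun s => ?_)) this
  rw [h.max_iff, Option.forall, Option.forall]
  change _ ↔ (IsMaxDissocOn G C (part s C) ∧ u ∈ part s C ∧ nbrCount G (part s C) u = 0) ∧
    ∀ i, IsMaxDissocOn G (T i) (part s (T i)) ∧ v i ∉ part s (T i)
  simp only [h.mem_C, h.mem_T]
  constructor
  · rintro ⟨⟨h1, h2, h3⟩, h4, h5⟩
    have hn := nbrCount_eq_zero.1 h5
    refine ⟨⟨h2, h4, ?_⟩, fun i => ⟨h3 i, fun hi => hn _ hi (h.hadj i)⟩⟩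
    have := nbrCount_mono G (part_subset s C) u
    omega
  · rintro ⟨⟨h2, h4, h5⟩, h3⟩
    have h6 : nbrCount G s u = 0 := by
      rw [h.nb_C s h.huC (fun _ i => (h3 i).2), h5]
    refine ⟨⟨(h.dissoc_mem h4).2 ⟨?_, by omega, fun i hi => absurd hi (h3 i).2⟩,
      h2, fun i => (h3 i).1⟩, h4, h6⟩
    rintro (_ | i)
    · exact h2.2.1
    · exact (h3 i).1.2.1

theorem count_deg1 (h : Decomp G C T u v) : numMaxDissocDeg1 G u
    = numMaxDissocOnDeg1 G C u * ∏ i, mbar G (T i) (T i \ {v i})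
      + numMaxDissocOnDeg0 G C u *
          ∑ j, mbar G (T j) (T j \ G.neighborSet (v j)) *
            ∏ i ∈ Finset.univ.erase j, mbar G (T i) (T i \ {v i}) := by
  simp only [mbar_del]
  simp only [fun j => mbar_nbr G (T j) (v j) (h.hv j)]
  let Q1 : Option (Fin r) → Finset V → Prop
    | none => fun t => IsMaxDissocOn G C t ∧ u ∈ t ∧ nbrCount G t u = 1
    | some i => fun t => IsMaxDissocOn G (T i) t ∧ v i ∉ t
  let Q2 (j : Fin r) : Option (Fin r) → Finset V → Prop
    | none => fun t => IsMaxDissocOn G C t ∧ u ∈ t ∧ nbrCount G t u = 0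
    | some i => fun t => IsMaxDissocOn G (T i) t ∧
        (if i = j then v i ∈ t ∧ nbrCount G t (v i) = 0 else v i ∉ t)
  have c1 := count_parts (pieces C T) h.hP Q1 (by
    rintro (_ | i) s hs
    · exact hs.1.1
    · exact hs.1.1)
  have c2 := fun j => count_parts (pieces C T) h.hP (Q2 j) (by
    rintro (_ | i) s hs
    · exact hs.1.1
    · exact hs.1.1)
  rw [Fintype.prod_option] at c1
  simp only [Fintype.prod_option] at c2
  let R : Option (Fin r) → Finset V → Prop
    | none => fun s => ∀ i, Q1 i (part s (pieces C T i))
    | some j => fun s => ∀ i, Q2 j i (part s (pieces C T i))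
  have e1 : ∀ s, R none s ↔
      (IsMaxDissocOn G C (part s C) ∧ u ∈ s ∧ nbrCount G (part s C) u = 1) ∧
      ∀ i, IsMaxDissocOn G (T i) (part s (T i)) ∧ v i ∉ s := by
    intro s
    change (∀ i, Q1 i (part s (pieces C T i))) ↔ _
    rw [Option.forall]
    change (IsMaxDissocOn G C (part s C) ∧ u ∈ part s C ∧ nbrCount G (part s C) u = 1) ∧
      (∀ i, IsMaxDissocOn G (T i) (part s (T i)) ∧ v i ∉ part s (T i)) ↔ _
    simp only [h.mem_C, h.mem_T]
  have e2 : ∀ s j, R (some j) s ↔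
      (IsMaxDissocOn G C (part s C) ∧ u ∈ s ∧ nbrCount G (part s C) u = 0) ∧
      ∀ i, IsMaxDissocOn G (T i) (part s (T i)) ∧
        (if i = j then v i ∈ s ∧ nbrCount G (part s (T i)) (v i) = 0 else v i ∉ s) := by
    intro s j
    change (∀ i, Q2 j i (part s (pieces C T i))) ↔ _
    rw [Option.forall]
    change (IsMaxDissocOn G C (part s C) ∧ u ∈ part s C ∧ nbrCount G (part s C) u = 0) ∧
      (∀ i, IsMaxDissocOn G (T i) (part s (T i)) ∧
        (if i = j then v i ∈ part s (T i) ∧ nbrCount G (part s (T i)) (v i) = 0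
          else v i ∉ part s (T i))) ↔ _
    simp only [h.mem_C, h.mem_T]
  have hfil : ∀ (s : Finset V) (j : Fin r), v j ∈ s → (∀ i, i ≠ j → v i ∉ s) →
      Finset.univ.filter (fun i => v i ∈ s) = {j} := by
    intro s j hj hi
    ext i
    simp only [Finset.mem_filter, Finset.mem_univ, true_and, Finset.mem_singleton]
    constructor
    · intro hs
      by_contra hne
      exact hi i hne hs
    · rintro rfl
      exact hj
  have main := count_exists
    (fun s => IsMaxDissocOn G Set.univ s ∧ u ∈ s ∧ nbrCount G s u = 1) R ?_ ?_
  · refine Eq.trans main ?_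
    rw [Fintype.sum_option]
    congr 1
    rw [Finset.mul_sum]
    refine Finset.sum_congr rfl fun j _ => ?_
    refine (c2 j).trans ?_
    congr 1
    rw [← Finset.mul_prod_erase _ _ (Finset.mem_univ j)]
    congr 1
    · simp [Q2]
    · refine Finset.prod_congr rfl fun i hi => ?_
      simp [Q2, Finset.ne_of_mem_erase hi]
  · intro s
    rw [Option.exists, e1]
    simp only [e2]
    rw [h.max_iff, Option.forall]
    constructor
    · rintro ⟨⟨h1, h2, h3⟩, h4, h5⟩
      have hd := (h.dissoc_mem h4).1 h1
      by_cases hex : ∃ j, v j ∈ s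
      · obtain ⟨j, hj⟩ := hex
        have h6 := h.nb_u s
        have hjm : j ∈ Finset.univ.filter (fun i => v i ∈ s) := by simp [hj]
        have h7 := Finset.card_pos.2 ⟨j, hjm⟩
        right
        refine ⟨j, ⟨h2, h4, by omega⟩, fun i => ⟨h3 i, ?_⟩⟩
        split_ifs with hij
        · subst hij
          exact ⟨hj, hd.2.2 _ hj⟩
        · intro hi
          exact hij (Finset.card_le_one.1 (by omega) i (by simp [hi]) j hjm)
      · push Not at hex
        left
        refine ⟨⟨h2, h4, ?_⟩, fun i => ⟨h3 i, hex i⟩⟩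
        rw [← h.nb_C s h.huC (fun _ => hex), h5]
    · rintro (⟨⟨h2, h4, h5⟩, h3⟩ | ⟨j, ⟨h2, h4, h5⟩, h3⟩)
      · have h6 : nbrCount G s u = 1 := by
          rw [h.nb_C s h.huC (fun _ i => (h3 i).2), h5]
        refine ⟨⟨(h.dissoc_mem h4).2 ⟨?_, by omega, fun i hi => absurd hi (h3 i).2⟩,
          h2, fun i => (h3 i).1⟩, h4, h6⟩
        rintro (_ | i)
        · exact h2.2.1
        · exact (h3 i).1.2.1
      · have hj : v j ∈ s ∧ nbrCount G (part s (T j)) (v j) = 0 := by simpa using (h3 j).2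
        have hi : ∀ i, i ≠ j → v i ∉ s := fun i hne => by simpa [hne] using (h3 i).2
        have h6 : nbrCount G s u = 1 := by
          rw [h.nb_u s, h5, hfil s j hj.1 hi]; simp
        refine ⟨⟨(h.dissoc_mem h4).2 ⟨?_, by omega, ?_⟩,
          h2, fun i => (h3 i).1⟩, h4, h6⟩
        · rintro (_ | i)
          · exact h2.2.1
          · exact (h3 i).1.2.1
        · intro i his
          by_cases hne : i = j
          · rw [hne]; exact hj.2
          · exact absurd his (hi i hne)
  · have aux : ∀ s i j, R (some i) s → R (some j) s → i = j := by
      intro s i j hi hj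
      rw [e2] at hi hj
      have a := (hi.2 i).2
      rw [if_pos rfl] at a
      have b := (hj.2 i).2
      by_contra hne
      rw [if_neg hne] at b
      exact b a.1
    have aux2 : ∀ s i, R none s → R (some i) s → False := by
      intro s i h1 h2
      rw [e1] at h1
      rw [e2] at h2
      have := h1.1.2.2
      have := h2.1.2.2
      omega
    rintro s (_ | i) (_ | j) hi hj
    · rfl
    · exact (aux2 s j hi hj).elim
    · exact (aux2 s i hj hi).elim
    · rw [aux s i j hi hj]

theorem count_total (G : SimpleGraph V) (u : V) : numMaxDissoc G
    = numMaxDissocAway G u + numMaxDissocDeg0 G u + numMaxDissocDeg1 G u := by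
  let R : Fin 3 → Finset V → Prop := fun i s => IsMaxDissocOn G Set.univ s ∧
    (if i = 0 then u ∉ s else if i = 1 then u ∈ s ∧ nbrCount G s u = 0
      else u ∈ s ∧ nbrCount G s u = 1)
  have := count_exists (IsMaxDissocOn G Set.univ) R ?_ ?_
  · rw [Fin.sum_univ_three] at this
    exact this
  · intro s
    constructor
    · intro hs
      by_cases hu : u ∈ s
      · have := hs.2.1 u hu
        rcases Nat.le_one_iff_eq_zero_or_eq_one.1 this with h0 | h1
        · exact ⟨1, hs, by simp [hu, h0]⟩
        · exact ⟨2, hs, by simp [hu, h1]⟩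
      · exact ⟨0, hs, by simp [hu]⟩
    · rintro ⟨j, hj⟩
      exact hj.1
  · rintro s i j ⟨_, hi⟩ ⟨_, hj⟩
    by_contra hne
    fin_cases i <;> fin_cases j <;> simp_all

end Decomp
end glue
section graph
variable {V : Type*} [Fintype V]

/-- Parametrization of a cycle by residues. -/
theorem exists_param {G : SimpleGraph V} {v0 : V} {c : G.Walk v0 v0} (hc : c.IsCycle) :
    ∃ f : ZMod c.length → V, Function.Injective f ∧ Set.range f = {x | x ∈ c.support} ∧
      ∀ i, G.Adj (f i) (f (i + 1)) := by
  have h3 := hc.three_le_length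
  haveI : NeZero c.length := ⟨by omega⟩
  haveI : Fact (1 < c.length) := ⟨by omega⟩
  refine ⟨fun i => c.getVert i.val, ?_, ?_, ?_⟩
  · intro i j hij
    apply ZMod.val_injective
    have hi := ZMod.val_lt i
    have hj := ZMod.val_lt j
    exact hc.getVert_injOn' (by simp only [Set.mem_ofPred_eq]; omega)
      (by simp only [Set.mem_ofPred_eq]; omega) hij
  · ext x
    simp only [Set.mem_range, Set.mem_ofPred_eq]
    rw [SimpleGraph.Walk.mem_support_iff_exists_getVert]
    constructor
    · rintro ⟨i, rfl⟩
      exact ⟨i.val, rfl, (ZMod.val_lt i).le⟩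
    · rintro ⟨m, rfl, hm⟩
      rcases hm.lt_or_eq with hm | hm
      · exact ⟨(m : ZMod c.length), by rw [ZMod.val_natCast_of_lt hm]⟩
      · exact ⟨0, by simp [hm]⟩
  · intro i
    have hi := ZMod.val_lt i
    have ha := c.adj_getVert_succ hi
    have hv : (i + 1).val = (i.val + 1) % c.length := by
      rw [ZMod.val_add, ZMod.val_one]
    change G.Adj (c.getVert i.val) (c.getVert (i + 1).val)
    rw [hv]
    by_cases hlt : i.val + 1 < c.length
    · rw [Nat.mod_eq_of_lt hlt]; exact ha
    · have : i.val + 1 = c.length := by omega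
      rw [this] at ha ⊢
      simpa using ha

theorem nbrs_of_param {G : SimpleGraph V} {n : ℕ} (hn : 3 ≤ n) {f : ZMod n → V}
    (hf : Function.Injective f) (ha : ∀ i, G.Adj (f i) (f (i + 1))) {i : ZMod n}
    (hdeg : ¬ 2 < (G.neighborSet (f i)).ncard) {y : V} (hy : G.Adj (f i) y) :
    y = f (i + 1) ∨ y = f (i - 1) := by
  by_contra hne
  push Not at hne
  apply hdeg
  rw [Set.two_lt_ncard_iff (Set.toFinite _)]
  refine ⟨y, f (i + 1), f (i - 1), hy, ha i, ?_, hne.1, hne.2, ?_⟩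
  · have := ha (i - 1)
    rw [sub_add_cancel] at this
    exact this.symm
  · intro h
    have h1 := hf h
    have h2 : ((2 : ℕ) : ZMod n) = 0 := by
      have : i + 1 - (i - 1) = 0 := sub_eq_zero.2 h1
      push_cast
      linear_combination this
    rw [ZMod.natCast_eq_zero_iff] at h2
    have := Nat.le_of_dvd (by norm_num) h2
    omega

theorem exists_max_avoid {G : SimpleGraph V} {v0 : V} {c : G.Walk v0 v0} (hc : c.IsCycle)
    {u : V} (hu : u ∈ c.support)
    (huuniq : ∀ w ∈ c.support, 2 < (G.neighborSet w).ncard → w = u) :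
    ∃ s, IsMaxDissocOn G {x | x ∈ c.support} s ∧ u ∉ s := by
  have h3 := hc.three_le_length
  obtain ⟨f, hf, hr, ha⟩ := exists_param hc
  generalize c.length = n at h3 f
  haveI : NeZero n := ⟨by omega⟩
  have hadj : ∀ i j, G.Adj (f i) (f j) ↔ j = i + 1 ∨ i = j + 1 := by
    intro i j
    constructor
    · intro hij
      have hmem : ∀ i, f i ∈ c.support := fun i => by
        have : f i ∈ Set.range f := ⟨i, rfl⟩
        rw [hr] at this; exact this
      by_cases hi : 2 < (G.neighborSet (f i)).ncard
      · by_cases hj : 2 < (G.neighborSet (f j)).ncard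
        · have h1 := huuniq _ (hmem i) hi
          have h2 := huuniq _ (hmem j) hj
          rw [h1, h2] at hij
          exact absurd hij (G.loopless.irrefl u)
        · rcases nbrs_of_param h3 hf ha hj hij.symm with h | h
          · exact Or.inr (hf h)
          · left; rw [hf h, sub_add_cancel]
      · rcases nbrs_of_param h3 hf ha hi hij with h | h
        · exact Or.inl (hf h)
        · right; rw [hf h, sub_add_cancel]
    · rintro (rfl | rfl)
      · exact ha i
      · exact (ha j).symm
  obtain ⟨s, hs⟩ := exists_max G {x | x ∈ c.support}
  obtain ⟨a, rfl⟩ : u ∈ Set.range f := by rw [hr]; exact hu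
  -- some vertex of the cycle is not in `s`
  obtain ⟨b, hb⟩ : ∃ b, f b ∉ s := by
    by_contra hall
    push Not at hall
    have h1 := hs.2.1 _ (hall 0)
    rw [nbrCount_eq, Finset.card_le_one] at h1
    have := h1 (f 1) (by simp [hall, hadj]) (f (-1)) (by simp [hall, hadj])
    have h2 : ((2 : ℕ) : ZMod n) = 0 := by
      have := hf this
      push_cast
      linear_combination this
    rw [ZMod.natCast_eq_zero_iff] at h2
    have := Nat.le_of_dvd (by norm_num) h2
    omega
  let I : Finset (ZMod n) := Finset.univ.filter (fun i => f i ∈ s)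
  have hI : I.image f = s := by
    ext x
    simp only [I, Finset.mem_image, Finset.mem_filter, Finset.mem_univ, true_and]
    constructor
    · rintro ⟨i, hi, rfl⟩; exact hi
    · intro hx
      have : x ∈ Set.range f := by rw [hr]; exact hs.1 hx
      obtain ⟨i, rfl⟩ := this
      exact ⟨i, hx, rfl⟩
  let g : ZMod n → V := fun i => f (i + (a - b))
  have hg : Function.Injective g := fun i j hij => add_right_cancel (hf hij)
  have hadj' : ∀ i j, G.Adj (g i) (g j) ↔ G.Adj (f i) (f j) := by
    intro i j
    simp only [g, hadj]
    constructor
    · rintro (h | h)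
      · left; linear_combination h
      · right; linear_combination h
    · rintro (h | h)
      · left; linear_combination h
      · right; linear_combination h
  have hcount : ∀ (F : ZMod n → V), Function.Injective F → ∀ i,
      nbrCount G (I.image F) (F i) = (I.filter (fun j => G.Adj (F i) (F j))).card := by
    intro F hF i
    rw [nbrCount_eq, Finset.filter_image, Finset.card_image_of_injective _ hF]
  refine ⟨I.image g, ⟨?_, ?_, ?_⟩, ?_⟩
  · rw [← hr]
    intro x hx
    obtain ⟨i, _, rfl⟩ := Finset.mem_image.1 hx
    exact ⟨_, rfl⟩
  · intro x hx
    obtain ⟨i, hi, rfl⟩ := Finset.mem_image.1 hx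
    rw [hcount g hg]
    simp only [hadj']
    rw [← hcount f hf, hI]
    exact hs.2.1 _ (Finset.mem_filter.1 hi).2
  · rw [← hs.2.2, Finset.card_image_of_injective _ hg, ← hI, Finset.card_image_of_injective _ hf]
  · intro hx
    obtain ⟨i, hi, h⟩ := Finset.mem_image.1 hx
    have h1 : i + (a - b) = a := hf h
    have h2 : i = b := by linear_combination h1
    subst h2
    exact hb (Finset.mem_filter.1 hi).2

theorem comp_eq {G : SimpleGraph V} {A S T : Set V} (hS : IsCompOf G A S) (hT : IsCompOf G A T)
    (h : (G.induce (S ∪ T)).Connected) : S = T := by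
  have h1 := hS.2.2.2 _ Set.subset_union_left (Set.union_subset hS.1 hT.1) h
  have h2 := hT.2.2.2 _ Set.subset_union_right (Set.union_subset hS.1 hT.1) h
  exact h1.symm.trans h2

theorem unique_nbr {G : SimpleGraph V} (hconn : G.Connected) (huni : G.edgeSet.ncard = Nat.card V)
    {v0 : V} {c : G.Walk v0 v0} (hc : c.IsCycle) {u : V} {T : Set V}
    (hu : u ∈ c.support)
    (hT : IsCompOf G {x | x ∈ c.support}ᶜ T) {a b : V} (ha : a ∈ T) (hb : b ∈ T)
    (hua : G.Adj u a) (hub : G.Adj u b) : a = b := by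
  by_contra hab
  have huT : u ∉ T := fun h => hT.1 h hu
  obtain ⟨e, he⟩ := c.edges.exists_mem_of_ne_nil (by simp [hc.not_nil])
  have heG := c.edges_subset_edgeSet he
  have hnb : ¬ G.IsBridge e := fun hbr => hbr.notMem_edges_of_isCycle hc he
  induction e with | _ x y
  have hxs : x ∈ c.support := c.fst_mem_support_of_mem_edges he
  have hys : y ∈ c.support := c.snd_mem_support_of_mem_edges he
  have hcon' := hconn.connected_delete_edge_of_not_isBridge hnb
  have htree : (G.deleteEdges {s(x, y)}).IsTree := by
    rw [SimpleGraph.isTree_iff_connected_and_card]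
    refine ⟨hcon', ?_⟩
    rw [← huni, SimpleGraph.edgeSet_deleteEdges, Nat.card_coe_set_eq]
    exact Set.ncard_diff_singleton_add_one heG (Set.toFinite _)
  have hbr := SimpleGraph.isAcyclic_iff_forall_adj_isBridge.1 htree.isAcyclic (v := u) (w := a)
  have hadjD : ∀ p q, q ∈ T → G.Adj p q → (G.deleteEdges {s(x, y)}).Adj p q := by
    intro p q hq hpq
    rw [SimpleGraph.deleteEdges_adj]
    refine ⟨hpq, fun h => ?_⟩
    rw [Set.mem_singleton_iff, Sym2.eq_iff] at h
    rcases h with ⟨_, rfl⟩ | ⟨_, rfl⟩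
    · exact hT.1 hq hys
    · exact hT.1 hq hxs
  have hbr' := hbr (hadjD u a ha hua)
  rw [SimpleGraph.isBridge_iff] at hbr'
  apply hbr'
  have hub' : ((G.deleteEdges {s(x, y)}).deleteEdges {s(u, a)}).Adj u b := by
    rw [SimpleGraph.deleteEdges_adj]
    refine ⟨hadjD u b hb hub, fun h => ?_⟩
    rw [Set.mem_singleton_iff, Sym2.eq_iff] at h
    rcases h with ⟨_, h⟩ | ⟨h, _⟩
    · exact hab h.symm
    · exact huT (h ▸ ha)
  refine hub'.reachable.trans ?_
  let φ : G.induce T →g ((G.deleteEdges {s(x, y)}).deleteEdges {s(u, a)}) :=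
    { toFun := fun z => z.1
      map_rel' := by
        rintro ⟨p, hp⟩ ⟨q, hq⟩ hpq
        have hpq' : G.Adj p q := hpq
        rw [SimpleGraph.deleteEdges_adj]
        refine ⟨hadjD p q hq hpq', fun h => ?_⟩
        rw [Set.mem_singleton_iff, Sym2.eq_iff] at h
        rcases h with ⟨h, _⟩ | ⟨_, h⟩
        · exact huT (h ▸ hp)
        · exact huT (h ▸ hq) }
  exact (hT.2.2.1.preconnected ⟨b, hb⟩ ⟨a, ha⟩).map φ

theorem decomp_of_potted {G : SimpleGraph V} {r : ℕ}
    (hconn : G.Connected) (huni : G.edgeSet.ncard = Nat.card V)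
    {v0 : V} {c : G.Walk v0 v0} (hc : c.IsCycle)
    {u : V} (hu : u ∈ c.support)
    (huuniq : ∀ w ∈ c.support, 2 < (G.neighborSet w).ncard → w = u)
    {T : Fin r → Set V}
    (hT : ∀ i, IsCompOf G {x | x ∈ c.support}ᶜ (T i))
    (hTinj : Function.Injective T)
    (hcover : (⋃ i, T i) = {x | x ∈ c.support}ᶜ)
    {v : Fin r → V} (hv : ∀ i, v i ∈ T i) (hadj : ∀ i, G.Adj u (v i)) :
    Decomp G {x | x ∈ c.support} T u v where
  huC := hu
  hv := hv
  hadj := hadj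
  hmax := exists_max_avoid hc hu huuniq
  hTT := by
    intro i j x y hx hy ha
    apply hTinj
    exact comp_eq (hT i) (hT j) (SimpleGraph.connected_induce_union
      (hT i).2.2.1.preconnected (hT j).2.2.1.preconnected hx hy ha)
  hP := by
    intro x
    by_cases hx : x ∈ c.support
    · refine ⟨none, hx, ?_⟩
      rintro (_ | i) hi
      · rfl
      · exact absurd hx ((hT i).1 hi)
    · have : x ∈ ⋃ i, T i := by rw [hcover]; exact hx
      obtain ⟨i, hi⟩ := Set.mem_iUnion.1 this
      refine ⟨some i, hi, ?_⟩
      rintro (_ | j) hj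
      · exact absurd hj hx
      · congr 1
        apply hTinj
        exact comp_eq (hT j) (hT i) (SimpleGraph.induce_union_connected
          (hT j).2.2.1.preconnected (hT i).2.2.1.preconnected ⟨x, hj, hi⟩)
  hCT := by
    intro i x y hx hy ha
    have hxu : x = u := by
      apply huuniq x hx
      by_contra hdeg
      obtain ⟨f, hf, hr, hfa⟩ := exists_param hc
      obtain ⟨a, rfl⟩ : x ∈ Set.range f := by rw [hr]; exact hx
      have hmem : ∀ i, f i ∈ c.support := fun i => by
        have : f i ∈ Set.range f := ⟨i, rfl⟩
        rw [hr] at this; exact this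
      rcases nbrs_of_param hc.three_le_length hf hfa hdeg ha with h | h
      · exact (hT i).1 hy (h ▸ hmem _)
      · exact (hT i).1 hy (h ▸ hmem _)
    subst hxu
    exact ⟨rfl, unique_nbr hconn huni hc hu (hT i) hy (hv i) ha (hadj i)⟩

end graph

theorem potted_vertex_decomposition {V : Type*} [Fintype V] (G : SimpleGraph V) (k r : ℕ)
    (hconn : G.Connected) (huni : G.edgeSet.ncard = Nat.card V)
    (v0 : V) (c : G.Walk v0 v0) (hc : c.IsCycle) (hck : c.length = k)
    (u : V) (hu : u ∈ c.support) (hudeg : 2 < (G.neighborSet u).ncard)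
    (huuniq : ∀ w ∈ c.support, 2 < (G.neighborSet w).ncard → w = u)
    (T : Fin r → Set V)
    (hT : ∀ i, IsCompOf G {x | x ∈ c.support}ᶜ (T i))
    (hTinj : Function.Injective T)
    (hcover : (⋃ i, T i) = {x | x ∈ c.support}ᶜ)
    (v : Fin r → V) (hv : ∀ i, v i ∈ T i) (hadj : ∀ i, G.Adj u (v i)) :
    numMaxDissoc G
        = numMaxDissocAway G u + numMaxDissocDeg0 G u + numMaxDissocDeg1 G u ∧
    numMaxDissocAway G u
        = numMaxDissocOnAway G {x | x ∈ c.support} u * ∏ i, numMaxDissocOn G (T i) ∧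
    numMaxDissocDeg0 G u
        = numMaxDissocOnDeg0 G {x | x ∈ c.support} u * ∏ i, mbar G (T i) (T i \ {v i}) ∧
    numMaxDissocDeg1 G u
        = numMaxDissocOnDeg1 G {x | x ∈ c.support} u * ∏ i, mbar G (T i) (T i \ {v i})
          + numMaxDissocOnDeg0 G {x | x ∈ c.support} u *
              ∑ j, mbar G (T j) (T j \ G.neighborSet (v j)) *
                ∏ i ∈ Finset.univ.erase j, mbar G (T i) (T i \ {v i}) := by
  have h := decomp_of_potted hconn huni hc hu huuniq hT hTinj hcover hv hadj
  exact ⟨Decomp.count_total G u, h.count_away, h.count_deg0, h.count_deg1⟩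
end

section
/- Define f(x) = 3^{x−1} + x + 1 and g(x) = 3^{x−1}. Let t, k₁, k₂, …, k_i be positive integers with k₁ + k₂ + ⋯ + k_i = t and i ≥ 2. Then f(k₁)·f(k₂)⋯f(k_i) + 2·g(k₁)·g(k₂)⋯g(k_i) < f(t) + 2·g(t). -/
/-- `f(x) = 3^{x-1} + x + 1`. -/
noncomputable def f (x : ℕ) : ℝ := 3 ^ (x - 1) + x + 1

/-- `g(x) = 3^{x-1}`. -/
noncomputable def g (x : ℕ) : ℝ := 3 ^ (x - 1)

theorem aux_lin (n : ℕ) : (n : ℝ) + 3 ≤ 3 * 3 ^ n := by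
  induction n with
  | zero => norm_num
  | succ n ih => push_cast; rw [pow_succ]; have : (0:ℝ) ≤ n := n.cast_nonneg; nlinarith

theorem f_succ_succ_le (n : ℕ) : f (n + 2) ≤ 2 / 3 * 3 ^ (n + 2) := by
  have h := aux_lin n
  simp only [f, Nat.add_sub_cancel, show n + 2 - 1 = n + 1 by omega]
  push_cast
  rw [pow_succ, pow_add]
  linarith

theorem f_le (x : ℕ) (hx : 1 ≤ x) : f x ≤ 3 ^ x := by
  obtain rfl | h := hx.eq_or_lt
  · norm_num [f]
  · obtain ⟨n, rfl⟩ := Nat.exists_eq_add_of_le' (show 2 ≤ x from h)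
    have := f_succ_succ_le n
    have h3 : (0:ℝ) < 3 ^ (n + 2) := by positivity
    linarith

theorem g_eq (x : ℕ) (hx : 1 ≤ x) : g x = 3 ^ x / 3 := by
  obtain ⟨n, rfl⟩ := Nat.exists_eq_add_of_le' hx
  simp [g, pow_succ]

theorem f_nonneg (x : ℕ) : 0 ≤ f x := by unfold f; positivity

theorem prod_f_add_two_prod_g_lt (i t : ℕ) (hi : 2 ≤ i)
    (k : Fin i → ℕ) (hk : ∀ j, 1 ≤ k j) (ht : 1 ≤ t) (hsum : ∑ j, k j = t) :
    ∏ j, f (k j) + 2 * ∏ j, g (k j) < f t + 2 * g t := by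
  have hR : f t + 2 * g t = 3 ^ t + t + 1 := by
    have h := g_eq t ht
    have h2 : f t = g t + t + 1 := rfl
    rw [h2, h]; ring
  rw [hR]
  by_cases hall : ∀ j, k j = 1
  · simp only [hall] at hsum ⊢
    have hit : i = t := by simpa using hsum
    subst hit
    have : (2:ℝ) ≤ i := by exact_mod_cast hi
    have hf : f 1 = 3 := by norm_num [f]
    have hg : g 1 = 1 := by norm_num [g]
    simp only [hf, hg, Finset.prod_const, Finset.card_univ, Fintype.card_fin, one_pow]
    linarith
  · push Not at hall
    obtain ⟨j, hj⟩ := hall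
    have hj2 : 2 ≤ k j := by have := hk j; omega
    have hp : ∏ j, (3:ℝ) ^ k j = 3 ^ t := by rw [Finset.prod_pow_eq_pow_sum, hsum]
    have hF : ∏ j, f (k j) ≤ 2 / 3 * 3 ^ t := by
      rw [← hp, ← Finset.mul_prod_erase _ _ (Finset.mem_univ j),
        ← Finset.mul_prod_erase _ (fun j => (3:ℝ) ^ k j) (Finset.mem_univ j), ← mul_assoc]
      apply mul_le_mul
      · obtain ⟨n, hn⟩ := Nat.exists_eq_add_of_le' hj2
        rw [hn]; exact f_succ_succ_le n
      · exact Finset.prod_le_prod (fun _ _ => f_nonneg _) (fun l _ => f_le _ (hk l))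
      · exact Finset.prod_nonneg (fun _ _ => f_nonneg _)
      · positivity
    have hG : ∏ j, g (k j) ≤ 3 ^ t / 9 := by
      rw [Finset.prod_congr rfl (fun l _ => g_eq (k l) (hk l)), Finset.prod_div_distrib, hp]
      simp only [Finset.prod_const, Finset.card_univ, Fintype.card_fin]
      have : (3:ℝ) ^ 2 ≤ 3 ^ i := pow_le_pow_right₀ (by norm_num) hi
      apply div_le_div_of_nonneg_left (by positivity) (by norm_num) (by linarith)
    have h3 : (0:ℝ) < 3 ^ t := by positivity
    have : (0:ℝ) ≤ t := t.cast_nonneg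
    linarith
end
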